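/- Let p be a prime, Φ : ℤ_p → ℤ_p a non-constant map with Φ(A) = Φ(−A) for all A ∈ ℤ_p, and α ∈ ℤ_p ∖ {0} with Φ(αA) = αΦ(A) for all A ∈ ℤ_p. Then the operation (a,x)·(b,y) = (αb + αx, αy + αΦ(b−a)) on ℤ_p × ℤ_p defines an indecomposable irretractable cycle set. Moreover, two such cycle sets with parameters (α,Φ) and (α′,Φ′) are isomorphic if and only if α = α′ and there exists β ∈ ℤ_p ∖ {0} with β⁻¹·Φ(βA) = Φ′(A) for all A ∈ ℤ_p. Conversely, every irretractable indecomposable cycle set of size p² is isomorphic to one of this form. -/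

import Mathlib

/-- A (non-degenerate) cycle set: a set with a binary operation satisfying
(C1) `(x·y)·(x·z) = (y·x)·(y·z)`, (C2) each left translation is bijective and
(C3) the square map `x ↦ x·x` is bijective. -/
structure CycleSet (X : Type*) where
  op : X → X → X
  c1 : ∀ x y z : X, op (op x y) (op x z) = op (op y x) (op y z)
  c2 : ∀ x : X, Function.Bijective (op x)
  c3 : Function.Bijective (fun x : X => op x x)

namespace CycleSet

variable {X Y : Type*}

/-- The permutation `σ_x : y ↦ x·y`. -/
noncomputable def sigma (C : CycleSet X) (x : X) : Equiv.Perm X :=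
  Equiv.ofBijective (C.op x) (C.c2 x)

/-- The permutation group `𝒢(X)` generated by all `σ_x`. -/
noncomputable def permGroup (C : CycleSet X) : Subgroup (Equiv.Perm X) :=
  Subgroup.closure (Set.range C.sigma)

/-- A cycle set is indecomposable if `𝒢(X)` acts transitively on `X`. -/
def Indecomposable (C : CycleSet X) : Prop :=
  ∀ x y : X, ∃ g ∈ C.permGroup, g x = y

/-- A cycle set is irretractable if `σ_x = σ_y` implies `x = y`. -/
def Irretractable (C : CycleSet X) : Prop :=
  ∀ x y : X, C.op x = C.op y → x = y

/-- `f` is an isomorphism of cycle sets from `C` to `D`. -/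
def IsIso (C : CycleSet X) (D : CycleSet Y) (f : X → Y) : Prop :=
  Function.Bijective f ∧ ∀ x y : X, f (C.op x y) = D.op (f x) (f y)

/-- Two cycle sets are isomorphic if there is an isomorphism between them. -/
def Iso (C : CycleSet X) (D : CycleSet Y) : Prop :=
  ∃ f : X → Y, C.IsIso D f

end CycleSet


namespace CS18

section PL
variable {p : ℕ} [Fact p.Prime]

/-- shift operator on functions on `ZMod p` -/
noncomputable def sh (p : ℕ) : Module.End (ZMod p) (ZMod p → ZMod p) :=
  LinearMap.funLeft (ZMod p) (ZMod p) (fun x => x + 1)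

/-- difference operator -/
noncomputable def df (p : ℕ) : Module.End (ZMod p) (ZMod p → ZMod p) := sh p - 1

lemma sh_pow_apply (k : ℕ) (f : ZMod p → ZMod p) (x : ZMod p) :
    ((sh p) ^ k) f x = f (x + k) := by
  induction k generalizing x with
  | zero => simp
  | succ k ih =>
    rw [pow_succ']
    show ((sh p ^ k) f) (x + 1) = _
    rw [ih]; push_cast; congr 1; ring

lemma df_pow_p : (df p) ^ p = 0 := by
  have h1 : (sh p) ^ p = 1 := by
    refine LinearMap.ext fun f => funext fun x => ?_
    rw [sh_pow_apply]
    simp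
  have : CharP (Module.End (ZMod p) (ZMod p → ZMod p)) p := by
    apply charP_of_injective_algebraMap (algebraMap (ZMod p) _).injective
  unfold df
  rw [sub_pow_char_of_commute _ (Commute.one_right _), h1, one_pow, sub_self]

lemma df_comm_sh : Commute (df p) (sh p) := by
  unfold df
  exact (Commute.refl _).sub_left (Commute.one_left _)

/-- for `f` of degree `≤ e+1`, `f(x+c) - f(x)` has degree `≤ e` -/
lemma df_shift (e : ℕ) (f : ZMod p → ZMod p) (hf : (df p ^ (e+1)) f = 0) (c : ℕ) :
    (df p ^ e) ((sh p ^ c - 1) f) = 0 := by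
  have h : df p ^ e * (sh p ^ c - 1) = (∑ i ∈ Finset.range c, sh p ^ i) * df p ^ (e+1) := by
    rw [pow_succ']
    change _ = _ * (df p * _)
    rw [← mul_assoc]
    change _ = (_ * (sh p - 1)) * _
    rw [geom_sum_mul]
    have h0 := (df_comm_sh (p := p)).pow_pow e c
    rw [mul_sub, sub_mul, h0.eq, mul_one, one_mul]
  have := congrArg (fun T => T f) h
  simp only [Module.End.mul_apply] at this
  rw [this, hf, map_zero]

lemma df_shift' (e : ℕ) (f : ZMod p → ZMod p) (hf : (df p ^ (e+2)) f = 0) (c : ℕ) :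
    (df p ^ e) ((sh p ^ c - 1) f) = (c : ZMod p) • (df p ^ (e+1)) f := by
  induction c with
  | zero => simp
  | succ c ih =>
    have h1 : (sh p ^ (c+1) - 1) = (sh p ^ c - 1) + (sh p ^ c - 1) * df p + df p := by
      unfold df; rw [pow_succ, sub_mul, mul_sub, one_mul, mul_one]; abel
    have h2 : (df p ^ e) ((sh p ^ c - 1) (df p f)) = 0 := by
      apply df_shift
      rw [← Module.End.mul_apply, ← pow_succ]; exact hf
    rw [h1, LinearMap.add_apply, LinearMap.add_apply, map_add, map_add, ih, Module.End.mul_apply, h2,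
      add_zero, ← Module.End.mul_apply, ← pow_succ]
    push_cast
    rw [add_smul, one_smul]

lemma df_zero_const (f : ZMod p → ZMod p) (hf : df p f = 0) (x y : ZMod p) : f x = f y := by
  have h1 : ∀ k : ℕ, ∀ x, f (x + k) = f x := by
    intro k x
    have := df_shift 0 f (by simpa using hf) k
    have := congrFun this x
    simp only [pow_zero, Module.End.one_apply, LinearMap.sub_apply, Pi.sub_apply, sh_pow_apply,
      Pi.zero_apply] at this
    exact sub_eq_zero.mp this
  have := h1 (y - x).val x
  simpa using this.symm

theorem PL2 (G : ZMod p → ZMod p → ZMod p)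
    (hG : ∀ x y A B, G (y + G x (A - B)) B + G x A = G (x + G y (B - A)) A + G y B) :
    ∀ x y k, G x k = G y k := by
  classical
  let g : ZMod p → (ZMod p → ZMod p) := fun k x => G x k
  have hex : ∃ n : ℕ, ∀ k, (df p ^ n) (g k) = 0 := ⟨p, fun k => by rw [df_pow_p]; rfl⟩
  have hsp := Nat.find_spec hex
  have hmin := fun m => Nat.find_min hex (m := m)
  set n := Nat.find hex with hn
  rcases Nat.lt_or_ge n 2 with h | h
  · have h1 : ∀ k, df p (g k) = 0 := by
      intro k
      have := hsp k
      interval_cases n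
      · simp only [pow_zero, Module.End.one_apply] at this
        rw [this, map_zero]
      · simpa using this
    intro x y k
    exact df_zero_const _ (h1 k) x y
  · exfalso
    obtain ⟨e, he⟩ : ∃ e, n = e + 2 := ⟨n - 2, by omega⟩
    rw [he] at hsp
    have h2 := hmin (e+1) (by omega)
    apply h2
    by_contra hcon
    push Not at hcon
    obtain ⟨B, hB⟩ := hcon
    obtain ⟨x0, hx0⟩ := Function.ne_iff.mp hB
    apply h2
    intro k
    let Lam : (ZMod p → ZMod p) →ₗ[ZMod p] ZMod p := (LinearMap.proj x0).comp (df p ^ e)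
    have key : ∀ x, G x k * (df p ^ (e+1)) (g B) x0
        = ∑ y, (G (x + G y (-k)) (k + B) - G x (k+B)) * Lam (fun j => if y = j then 1 else 0) := by
      intro x
      have e1 : Lam (fun y => G (y + G x k) B - G y B) = G x k * (df p ^ (e+1)) (g B) x0 := by
        have := df_shift' e (g B) (hsp B) (G x k).val
        have h3 := congrFun this x0
        have h4 : (fun y => G (y + G x k) B - G y B) = (sh p ^ (G x k).val - 1) (g B) := by
          ext y
          simp [sh_pow_apply, g]
        rw [h4]
        rw [Pi.smul_apply, smul_eq_mul, ZMod.natCast_zmod_val] at h3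
        exact h3
      have e2 : (fun y => G (y + G x k) B - G y B)
          = fun y => G (x + G y (-k)) (k + B) - G x (k+B) := by
        ext y
        have := hG x y (k + B) B
        rw [show k + B - B = k by ring, show B - (k + B) = -k by ring] at this
        linear_combination this
      rw [← e1, e2, LinearMap.pi_apply_eq_sum_univ]
      rfl
    have key2 : ((df p ^ (e+1)) (g B) x0) • g k = ∑ y, (Lam (fun j => if y = j then 1 else 0)) •
        ((sh p ^ (G y (-k)).val - 1) (g (k + B))) := by
      ext x
      rw [Finset.sum_apply]
      have := key x
      simp only [Pi.smul_apply, smul_eq_mul, LinearMap.sub_apply, Pi.sub_apply, sh_pow_apply,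
        Module.End.one_apply, g, ZMod.natCast_val, ZMod.cast_id', id] at this ⊢
      rw [mul_comm, this]
      exact Finset.sum_congr rfl fun y _ => mul_comm _ _
    have key3 : ((df p ^ (e+1)) (g B) x0) • (df p ^ (e+1)) (g k) = 0 := by
      rw [← map_smul, key2, map_sum]
      apply Finset.sum_eq_zero
      intro y _
      rw [map_smul, df_shift (e+1) _ (hsp _), smul_zero]
    exact (smul_eq_zero.mp key3).resolve_left hx0

end PL
end CS18


namespace CS18

section K
variable {p : ℕ} [Fact p.Prime]

lemma step_affine (f : ZMod p → ZMod p) (c d : ZMod p) (hc : c ≠ 0)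
    (h : ∀ x, f (x + c) = f x + d) (x : ZMod p) : f x = f 0 + d / c * x := by
  have h1 : ∀ k : ℕ, f (k * c) = f 0 + k * d := by
    intro k
    induction k with
    | zero => simp
    | succ k ih =>
      push_cast
      rw [add_mul, one_mul, h, ih]; ring
  have := h1 (x / c).val
  rw [ZMod.natCast_zmod_val, div_mul_cancel₀ _ hc] at this
  rw [this]; ring

lemma step_const (f : ZMod p → ZMod p) (c : ZMod p) (hc : c ≠ 0)
    (h : ∀ x, f (x + c) = f x) (x y : ZMod p) : f x = f y := by
  rw [step_affine f c 0 hc (by simpa using h) x, step_affine f c 0 hc (by simpa using h) y]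
  simp

lemma W (hp2 : p ≠ 2) (Φ w : ZMod p → ZMod p) (ev : ∀ A, Φ (-A) = Φ A)
    (h : ∀ a, ∃ a', ∀ b, w b = Φ (b - a') - Φ (b - a)) (a : ZMod p) : w a = 0 := by
  obtain ⟨a', h1⟩ := h a
  obtain ⟨a'', h2⟩ := h a'
  have e1 : Φ (a - a') = Φ (a' - a) := by rw [← ev, neg_sub]
  have e2 : Φ (a' - a'') = Φ (a'' - a') := by rw [← ev, neg_sub]
  have e3 : Φ (a - a'') = Φ (a'' - a) := by rw [← ev, neg_sub]
  have a1 := h1 a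
  have a2 := h1 a'
  have a3 := h1 a''
  have b1 := h2 a
  have b2 := h2 a'
  have b3 := h2 a''
  simp only [sub_self] at a1 a2 a3 b1 b2 b3
  have h4 : (4 : ZMod p) * w a = 0 := by
    linear_combination a1 + b1 + a3 + b3 + e3 - 2 * (b2 + b3 + e2 - a1 - a2 - e1)
  have h2' : (2 : ZMod p) ≠ 0 := by
    intro h0
    have : ((2 : ℕ) : ZMod p) = 0 := by exact_mod_cast h0
    rw [ZMod.natCast_eq_zero_iff] at this
    exact hp2 ((Nat.prime_dvd_prime_iff_eq Fact.out Nat.prime_two).mp this)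
  have : (4 : ZMod p) ≠ 0 := by
    rw [show (4 : ZMod p) = 2 * 2 by norm_num]; exact mul_ne_zero h2' h2'
  exact (mul_eq_zero.mp h4).resolve_left this

theorem K1 (s : ZMod p → ZMod p → ZMod p) (f : ZMod p → ZMod p → ZMod p → ZMod p)
    (n : ZMod p → ZMod p) (hn : ∃ a, n a ≠ 0)
    (inj : ∀ a x a' x', s a x = s a' x' → (∀ b, f a x b = f a' x' b) → a = a' ∧ x = x')
    (c1 : ∀ a x b y, s (b + s a x) (y + f a x b) + s a x = s (a + s b y) (x + f b y a) + s b y)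
    (c2 : ∀ a x b y c, f (b + s a x) (y + f a x b) (c + s a x) + f a x c
      = f (a + s b y) (x + f b y a) (c + s b y) + f b y c)
    (n1 : ∀ a x, s a (x + n a) = s a x)
    (n2 : ∀ a x b, f a (x + n a) b = f a x b + n (b + s a x) - n b) : False := by
  have z1 : ∀ a x, s a x = 0 → n a = 0 := by
    intro a x h
    have := (inj a (x + n a) a x (n1 a x) (fun b => by rw [n2, h]; ring_nf)).2
    simpa using this
  have z2 : ∀ a x, n a = 0 → s a x = 0 := by
    intro a x h
    by_contra hs
    obtain ⟨a0, ha0⟩ := hn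
    apply ha0
    rw [← h]
    apply step_const n (s a x) hs
    intro b
    have := n2 a x b
    rw [h, add_zero] at this
    linear_combination -this
  have sc : ∀ a x y, s a x = s a y := by
    intro a x y
    by_cases h : n a = 0
    · rw [z2 a x h, z2 a y h]
    · exact step_const (s a) (n a) h (n1 a) x y
  have sc2 : ∀ a b, s a 0 = s b 0 := by
    intro a b
    refine PL2 (fun a _ => s a 0) ?_ a b 0
    intro x y A B
    have := c1 x 0 y 0
    rw [sc _ (0 + _) 0, sc _ (0 + _) 0] at this
    exact this
  obtain ⟨t, ht⟩ : ∃ t, ∀ a x, s a x = t := ⟨s 0 0, fun a x => by rw [sc a x 0, sc2 a 0]⟩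
  simp only [ht] at *
  have ht0 : t ≠ 0 := by
    rintro rfl
    obtain ⟨a0, ha0⟩ := hn
    exact ha0 (z1 a0 0 rfl)
  have hna : ∀ a, n a ≠ 0 := fun a h => ht0 (z2 a 0 h)
  have aff : ∀ a b x, f a x b = f a 0 b + (n (b + t) - n b) / n a * x := by
    intro a b x
    exact step_affine (fun x => f a x b) (n a) (n (b + t) - n b) (hna a)
      (fun x => by simp only [n2]; ring) x
  have main : ∀ a b c, (n (c + t + t) - n (c + t)) * (n a / n (a + t) + n b / n (b + t) - 1)
      = n (c + t) - n c := by
    intro a b c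
    have h1 := c2 a 1 b 0 c
    have h0 := c2 a 0 b 0 c
    rw [aff (b + t), aff a b, aff a c 1, aff (a + t)] at h1
    rw [aff (b + t), aff (a + t)] at h0
    have h2 : (n (c + t + t) - n (c + t)) / n (b + t) * ((n (b + t) - n b) / n a)
        + (n (c + t) - n c) / n a = (n (c + t + t) - n (c + t)) / n (a + t) := by
      linear_combination h1 - h0
    have i1 := hna a
    have i2 := hna (a + t)
    have i3 := hna b
    have i4 := hna (b + t)
    field_simp at h2 ⊢
    linear_combination -h2
  have del : ∀ c, n (c + t) - n c = 0 := by
    by_contra hcon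
    push Not at hcon
    obtain ⟨c, hc⟩ := hcon
    have hne : n (c + t + t) - n (c + t) ≠ 0 := by
      intro h
      rw [← main 0 0 c, h, zero_mul] at hc
      exact hc rfl
    have rc : ∀ a, n a / n (a + t) = n 0 / n (0 + t) := by
      intro a
      have h1 := main a 0 c
      have h2 := main 0 0 c
      rw [← h2] at h1
      have := mul_left_cancel₀ hne h1
      linear_combination this
    set r := n 0 / n (0 + t) with hr
    have hr0 : r ≠ 0 := div_ne_zero (hna _) (hna _)
    have pw : ∀ k : ℕ, n 0 = r ^ k * n (k * t) := by
      intro k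
      induction k with
      | zero => simp
      | succ k ih =>
        have := rc (k * t)
        rw [div_eq_iff (hna _)] at this
        rw [ih, this]; push_cast
        rw [add_mul, one_mul]; ring
    have := pw p
    rw [CharP.cast_eq_zero, zero_mul, ZMod.pow_card] at this
    have hr1 : r = 1 := by
      have h3 : (r - 1) * n 0 = 0 := by linear_combination -this
      have := (mul_eq_zero.mp h3).resolve_right (hna 0)
      linear_combination this
    have := rc c
    rw [hr1, div_eq_iff (hna _)] at this
    apply hc; rw [this]; ring
  have := (inj 0 0 0 1 trivial (fun b => by rw [aff 0 b 1, del]; ring)).2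
  exact zero_ne_one this

theorem K2 (s : ZMod p → ZMod p) (g : ZMod p → ZMod p → ZMod p)
    (inj : ∀ a x a' x', s x = s x' → (∀ b, g x (b - a) = g x' (b - a')) → a = a' ∧ x = x')
    (c1 : ∀ x y k, s (y + g x k) + s x = s (x + g y (-k)) + s y)
    (c2 : ∀ x y A B, g (y + g x (A - B)) B + g x A = g (x + g y (B - A)) A + g y B) :
    ∃ (Φ : ZMod p → ZMod p) (μ ν : ZMod p), μ ≠ 0 ∧ (∀ x k, g x k = Φ k) ∧
      (∀ x, s x = μ * x + ν) ∧ (∀ k, Φ (-k) = Φ k) ∧ (∃ i j, Φ i ≠ Φ j) := by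
  have hc := PL2 g c2
  have hg : ∀ x k, g x k = g 0 k := fun x k => hc x 0 k
  have sinj : ∀ x y, s x = s y → x = y := fun x y h =>
    (inj 0 x 0 y h (fun b => by rw [hg x, hg y])).2
  have hnc : ∃ i j, g 0 i ≠ g 0 j := by
    by_contra h
    push Not at h
    exact zero_ne_one (inj 0 0 1 0 rfl (fun b => h _ _)).1
  have hnz : ∃ k, g 0 k ≠ 0 := by
    obtain ⟨i, j, hij⟩ := hnc
    by_contra h
    push Not at h
    exact hij (by rw [h, h])
  obtain ⟨k, hk⟩ := hnz
  have st : ∀ y, s (y + g 0 k) = s y + (s (0 + g 0 (-k)) - s 0) := by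
    intro y
    have := c1 0 y k
    rw [hg y] at this
    linear_combination this
  have haff := step_affine s _ _ hk st
  set μ := (s (0 + g 0 (-k)) - s 0) / g 0 k with hμ
  have hμ0 : μ ≠ 0 := by
    intro h
    apply zero_ne_one (α := ZMod p)
    apply sinj
    rw [haff 1, h]; ring
  refine ⟨g 0, μ, s 0, hμ0, hg, fun x => by rw [haff x]; ring, fun k => ?_, hnc⟩
  have := c1 0 0 k
  have h2 := sinj (0 + g 0 k) (0 + g 0 (-k)) (by linear_combination this)
  simpa using h2.symm

end K
end CS18


namespace CS18

section Part1
variable {p : ℕ} [Fact p.Prime]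

theorem part1 (Φ : ZMod p → ZMod p) (α : ZMod p)
    (hnc : ∃ i j : ZMod p, Φ i ≠ Φ j) (ev : ∀ A : ZMod p, Φ (-A) = Φ A)
    (hα : α ≠ 0) (hΦ : ∀ A : ZMod p, Φ (α * A) = α * Φ A) :
      ∃ C : CycleSet (ZMod p × ZMod p),
        (∀ a b x y : ZMod p,
          C.op (a, x) (b, y) = (α * b + α * x, α * y + α * Φ (b - a))) ∧
        C.Indecomposable ∧ C.Irretractable := by
  let C : CycleSet (ZMod p × ZMod p) :=
    { op := fun u v => (α * v.1 + α * u.2, α * v.2 + α * Φ (v.1 - u.1))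
      c1 := by
        rintro ⟨a, x⟩ ⟨b, y⟩ ⟨c, z⟩
        have e : Φ (a - b) = Φ (b - a) := by rw [← ev, neg_sub]
        simp only
        rw [show α * c + α * x - (α * b + α * x) = α * (c - b) by ring,
          show α * c + α * y - (α * a + α * y) = α * (c - a) by ring, hΦ, hΦ, e]
        ext <;> simp only <;> ring
      c2 := by
        rintro ⟨a, x⟩
        refine Finite.injective_iff_bijective.mp ?_
        rintro ⟨b, y⟩ ⟨c, z⟩ h
        simp only [Prod.mk.injEq] at h
        obtain ⟨h1, h2⟩ := h
        have h3 : b = c := mul_left_cancel₀ hα (by linear_combination h1)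
        subst h3
        have h4 : y = z := mul_left_cancel₀ hα (by linear_combination h2)
        rw [h4]
      c3 := by
        refine Finite.injective_iff_bijective.mp ?_
        rintro ⟨b, y⟩ ⟨c, z⟩ h
        simp only [Prod.mk.injEq, sub_self] at h
        obtain ⟨h1, h2⟩ := h
        have h4 : y = z := mul_left_cancel₀ hα (by linear_combination h2)
        subst h4
        have h3 : b = c := mul_left_cancel₀ hα (by linear_combination h1)
        rw [h3] }
  have hC : ∀ a b x y : ZMod p,
          C.op (a, x) (b, y) = (α * b + α * x, α * y + α * Φ (b - a)) := fun _ _ _ _ => rfl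
  have mem : ∀ u, C.sigma u ∈ C.permGroup := fun u => Subgroup.subset_closure ⟨u, rfl⟩
  have sg : ∀ a x b y, C.sigma (a, x) (b, y) = (α * b + α * x, α * y + α * Φ (b - a)) :=
    fun _ _ _ _ => rfl
  have sgi : ∀ a x b y, (C.sigma (a, x))⁻¹ (b, y) = (b / α - x, y / α - Φ (b / α - x - a)) := by
    intro a x b y
    rw [Equiv.Perm.inv_eq_iff_eq, sg]
    ext <;> simp only <;> field_simp <;> ring
  refine ⟨C, hC, ?_, ?_⟩
  · -- transitivity
    have hor : ∀ t B Y, ∃ g ∈ C.permGroup, g (B, Y) = (B + t, Y) := by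
      intro t B Y
      refine ⟨C.sigma (B / α, t / α) * (C.sigma (B / α, 0))⁻¹,
        mul_mem (mem _) (inv_mem (mem _)), ?_⟩
      rw [Equiv.Perm.mul_apply, sgi, sg]
      ext <;> simp only <;> field_simp <;> ring_nf
    obtain ⟨i, j, hij⟩ := hnc
    set d := α * (Φ i - Φ j) with hd
    have hd0 : d ≠ 0 := mul_ne_zero hα (sub_ne_zero.mpr hij)
    have ver1 : ∀ B Y, ∃ g ∈ C.permGroup, g (B, Y) = (B, Y + d) := by
      intro B Y
      refine ⟨C.sigma (B / α - i, 0) * (C.sigma (B / α - j, 0))⁻¹,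
        mul_mem (mem _) (inv_mem (mem _)), ?_⟩
      rw [Equiv.Perm.mul_apply, sgi, sg]
      have e1 : B / α - 0 - (B / α - j) = j := by ring
      have e2 : B / α - 0 - (B / α - i) = i := by ring
      rw [e1, e2, hd]
      ext <;> simp only <;> field_simp <;> ring
    have verk : ∀ (k : ℕ) B Y, ∃ g ∈ C.permGroup, g (B, Y) = (B, Y + k * d) := by
      intro k
      induction k with
      | zero => intro B Y; exact ⟨1, one_mem _, by simp⟩
      | succ k ih =>
        intro B Y
        obtain ⟨g, hg, e⟩ := ih B Y
        obtain ⟨g', hg', e'⟩ := ver1 B (Y + k * d)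
        refine ⟨g' * g, mul_mem hg' hg, ?_⟩
        rw [Equiv.Perm.mul_apply, e, e']; push_cast
        ext <;> simp only; ring
    rintro ⟨B, Y⟩ ⟨B', Y'⟩
    obtain ⟨g, hg, e⟩ := verk ((Y' - Y) / d).val B Y
    rw [ZMod.natCast_zmod_val, div_mul_cancel₀ _ hd0] at e
    obtain ⟨g', hg', e'⟩ := hor (B' - B) B (Y + (Y' - Y))
    refine ⟨g' * g, mul_mem hg' hg, ?_⟩
    rw [Equiv.Perm.mul_apply, e, e']
    ext <;> simp only <;> ring
  · rintro ⟨a, x⟩ ⟨b, y⟩ h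
    have h1 := fun c => congrFun h (c, 0)
    simp only [hC, Prod.mk.injEq] at h1
    have hx : x = y := mul_left_cancel₀ hα (by linear_combination (h1 0).1)
    subst hx
    have h2 : ∀ c, Φ (c - a) = Φ (c - b) := fun c =>
      mul_left_cancel₀ hα (by linear_combination (h1 c).2)
    by_contra hne
    have hab : a - b ≠ 0 := by
      intro h; apply hne; rw [sub_eq_zero.mp h]
    obtain ⟨i, j, hij⟩ := hnc
    apply hij
    refine step_const Φ (a - b) hab (fun c => ?_) i j
    have := h2 (c + a)
    rw [show c + a - a = c by ring, show c + a - b = c + (a - b) by ring] at this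
    exact this.symm

end Part1
end CS18


namespace CS18

section Part2
variable {p : ℕ} [Fact p.Prime]

theorem part2_mpr (Φ Φ' : ZMod p → ZMod p) (α : ZMod p)
    (C D : CycleSet (ZMod p × ZMod p))
    (hC : ∀ a b x y : ZMod p,
          C.op (a, x) (b, y) = (α * b + α * x, α * y + α * Φ (b - a)))
    (hD : ∀ a b x y : ZMod p,
          D.op (a, x) (b, y) = (α * b + α * x, α * y + α * Φ' (b - a)))
    (β : ZMod p) (hβ : β ≠ 0) (h : ∀ A : ZMod p, β⁻¹ * Φ (β * A) = Φ' A) : C.Iso D := by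
  have hb : β⁻¹ ≠ 0 := inv_ne_zero hβ
  refine ⟨fun u => (β⁻¹ * u.1, β⁻¹ * u.2), Finite.injective_iff_bijective.mp ?_, ?_⟩
  · rintro ⟨a, x⟩ ⟨b, y⟩ h
    simp only [Prod.mk.injEq] at h
    rw [mul_left_cancel₀ hb h.1, mul_left_cancel₀ hb h.2]
  · rintro ⟨a, x⟩ ⟨b, y⟩
    simp only [hC, hD]
    have := h (β⁻¹ * b - β⁻¹ * a)
    rw [← this, show β * (β⁻¹ * b - β⁻¹ * a) = b - a by field_simp]
    ext <;> simp only <;> ring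

theorem part2_two (Φ Φ' : ZMod 2 → ZMod 2) (α α' : ZMod 2)
    (hnc : ∃ i j : ZMod 2, Φ i ≠ Φ j) (hα : α ≠ 0)
    (hnc' : ∃ i j : ZMod 2, Φ' i ≠ Φ' j) (hα' : α' ≠ 0)
    (C D : CycleSet (ZMod 2 × ZMod 2))
    (hC : ∀ a b x y : ZMod 2,
          C.op (a, x) (b, y) = (α * b + α * x, α * y + α * Φ (b - a)))
    (hD : ∀ a b x y : ZMod 2,
          D.op (a, x) (b, y) = (α' * b + α' * x, α' * y + α' * Φ' (b - a)))
    (h : C.Iso D) : α = α' ∧ ∃ β : ZMod 2, β ≠ 0 ∧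
          ∀ A : ZMod 2, β⁻¹ * Φ (β * A) = Φ' A := by
  have two : ∀ a : ZMod 2, a ≠ 0 → a = 1 := by decide
  obtain rfl := two α hα
  obtain rfl := two α' hα'
  simp only [one_mul] at hC hD
  refine ⟨rfl, 1, one_ne_zero, ?_⟩
  obtain ⟨f, hf, hop⟩ := h
  have h0 : Φ 0 = 0 ↔ Φ' 0 = 0 := by
    constructor
    · intro h0
      have := hop (0, 0) (0, 0)
      rw [hC, sub_self, h0] at this
      obtain ⟨⟨a, x⟩, he⟩ : ∃ w, f (0, 0) = w := ⟨_, rfl⟩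
      simp only [add_zero] at this
      rw [he, hD, sub_self] at this
      simpa using (Prod.mk.inj this).2
    · intro h0
      obtain ⟨⟨a, x⟩, he⟩ := hf.2 (0, 0)
      have := hop (a, x) (a, x)
      rw [he, hD, sub_self, h0] at this
      simp only [add_zero] at this
      rw [← he] at this
      have := hf.1 this
      rw [hC, sub_self] at this
      simpa using (Prod.mk.inj this).2
  have e0 : Φ 0 = Φ' 0 := by
    generalize Φ 0 = u at h0
    generalize Φ' 0 = v at h0
    revert u v; decide
  have key : ∀ F : ZMod 2 → ZMod 2, (∃ i j, F i ≠ F j) → F 1 = F 0 + 1 := by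
    intro F hF
    have : F 0 ≠ F 1 := by
      rintro h
      obtain ⟨i, j, hij⟩ := hF
      apply hij
      have z : ∀ a : ZMod 2, a = 0 ∨ a = 1 := by decide
      rcases z i with rfl | rfl <;> rcases z j with rfl | rfl <;> simp [h]
    generalize F 0 = u at this
    generalize F 1 = v at this
    revert u v; decide
  intro A
  have z : ∀ a : ZMod 2, a = 0 ∨ a = 1 := by decide
  rcases z A with rfl | rfl
  · simp [e0]
  · simp [key Φ hnc, key Φ' hnc', e0]

theorem part2_mp (Φ Φ' : ZMod p → ZMod p) (α α' : ZMod p) (hp2 : p ≠ 2)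
    (hnc : ∃ i j : ZMod p, Φ i ≠ Φ j)
    (hα : α ≠ 0) (hΦ : ∀ A : ZMod p, Φ (α * A) = α * Φ A)
    (ev' : ∀ A : ZMod p, Φ' (-A) = Φ' A)
    (hα' : α' ≠ 0) (hΦ' : ∀ A : ZMod p, Φ' (α' * A) = α' * Φ' A)
    (C D : CycleSet (ZMod p × ZMod p))
    (hC : ∀ a b x y : ZMod p,
          C.op (a, x) (b, y) = (α * b + α * x, α * y + α * Φ (b - a)))
    (hD : ∀ a b x y : ZMod p,
          D.op (a, x) (b, y) = (α' * b + α' * x, α' * y + α' * Φ' (b - a)))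
    (h : C.Iso D) : α = α' ∧ ∃ β : ZMod p, β ≠ 0 ∧
          ∀ A : ZMod p, β⁻¹ * Φ (β * A) = Φ' A := by
  obtain ⟨f, hf, hop⟩ := h
  -- conjugating horizontal translations
  have h1 : ∀ a x, ∃ a' x', ∀ v, f ((C.op (f.invFun (a, x)) v).1 + 1, (C.op (f.invFun (a, x)) v).2)
      = D.op (a', x') (f v) := by
    intro a x
    obtain ⟨u, hu⟩ := hf.2 (a, x)
    have hinv : f.invFun (a, x) = u := by
      rw [← hu]; exact Function.leftInverse_invFun hf.1 u
    rw [hinv]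
    refine ⟨(f (u.1, u.2 + 1 / α)).1, (f (u.1, u.2 + 1 / α)).2, fun v => ?_⟩
    rw [Prod.mk.eta, ← hop]
    congr 1
    obtain ⟨a, x⟩ := u
    obtain ⟨b, y⟩ := v
    rw [hC, hC]
    ext <;> simp only <;> field_simp
    ring
  have h2 : ∀ a x, ∃ a' x', ∀ b y, ∀ w : ZMod p × ZMod p, f w = D.op (a, x) (b, y) →
      f (w.1 + 1, w.2) = D.op (a', x') (b, y) := by
    intro a x
    obtain ⟨a', x', h⟩ := h1 a x
    refine ⟨a', x', fun b y w hw => ?_⟩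
    obtain ⟨v, hv⟩ := hf.2 (b, y)
    have := h v
    rw [hv] at this
    rw [← this]
    have : w = C.op (f.invFun (a, x)) v := by
      apply hf.1
      rw [hw, hop, hv, Function.rightInverse_invFun hf.2]
    rw [this]
  obtain ⟨a0, x0, h0⟩ := h2 0 0
  have h3 : ∀ w : ZMod p × ZMod p, f (w.1 + 1, w.2) = ((f w).1 + α' * x0,
      (f w).2 + α' * (Φ' ((f w).1 / α' - a0) - Φ' ((f w).1 / α'))) := by
    intro w
    rw [h0 ((f w).1 / α') ((f w).2 / α' - Φ' ((f w).1 / α')) w]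
    · rw [hD]
      ext <;> simp only <;> field_simp; ring
    · rw [hD]
      ext <;> simp only [sub_zero, mul_zero, add_zero] <;> field_simp; ring
  have hW : ∀ b, (Φ' (b - a0) - Φ' b) = 0 := by
    apply W hp2 Φ' _ ev'
    intro a
    obtain ⟨a', x', h⟩ := h2 a 0
    refine ⟨a', fun b => ?_⟩
    obtain ⟨w, hw⟩ := hf.2 (D.op (a, 0) (b, 0))
    have h4 := h b 0 w hw
    rw [h3, hw] at h4
    rw [hD, hD] at h4
    have := (Prod.mk.inj h4).2
    simp only [mul_zero, add_zero, zero_add] at this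
    rw [mul_div_cancel_left₀ _ hα'] at this
    have := mul_left_cancel₀ hα' (a := α') (b := Φ' (b - a) + (Φ' (b - a0) - Φ' b)) 
      (c := Φ' (b - a')) (by linear_combination this)
    linear_combination this
  obtain ⟨μ, hμ⟩ : ∃ μ, μ = α' * x0 := ⟨_, rfl⟩
  have h4 : ∀ w : ZMod p × ZMod p, f (w.1 + 1, w.2) = ((f w).1 + μ, (f w).2) := by
    intro w; rw [h3, hW, hμ]; simp
  have h5 : ∀ (k : ℕ) x, f ((k : ZMod p), x) = ((f (0, x)).1 + k * μ, (f (0, x)).2) := by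
    intro k x
    induction k with
    | zero => simp
    | succ k ih =>
      push_cast
      rw [h4 (k, x), ih]
      ext <;> simp only; ring
  obtain ⟨f1, hf1⟩ : ∃ f1 : ZMod p → ZMod p, ∀ x, f1 x = (f (0, x)).1 := ⟨_, fun _ => rfl⟩
  obtain ⟨f2, hf2⟩ : ∃ f2 : ZMod p → ZMod p, ∀ x, f2 x = (f (0, x)).2 := ⟨_, fun _ => rfl⟩
  have h6 : ∀ a x, f (a, x) = (f1 x + a * μ, f2 x) := by
    intro a x
    have := h5 a.val x
    rw [ZMod.natCast_zmod_val] at this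
    rw [this, hf1, hf2]
  have hμ0 : μ ≠ 0 := by
    intro h
    have := hf.1 (a₁ := (0, 0)) (a₂ := (1, 0)) (by rw [h6, h6, h]; simp)
    simp at this
  have h7 : ∀ a x b y, f1 (α * y + α * Φ (b - a)) + (α * b + α * x) * μ
      = α' * (f1 y + b * μ) + α' * f2 x ∧ f2 (α * y + α * Φ (b - a))
      = α' * f2 y + α' * Φ' (f1 y + b * μ - (f1 x + a * μ)) := by
    intro a x b y
    have := hop (a, x) (b, y)
    rw [hC, h6, h6, h6, hD] at this
    exact Prod.mk.inj this
  have hαα : α = α' := by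
    have e1 := (h7 0 0 0 0).1
    have e2 := (h7 1 0 1 0).1
    rw [sub_self] at e1 e2
    apply mul_right_cancel₀ hμ0
    linear_combination e2 - e1
  subst hαα
  obtain ⟨ν, hν⟩ : ∃ ν, ν = f2 0 := ⟨_, rfl⟩
  have h8 : ∀ x, f2 x = μ * x + ν := by
    intro x
    have e1 := (h7 0 0 0 0).1
    have e2 := (h7 0 x 0 0).1
    apply mul_left_cancel₀ hα
    rw [hν]
    linear_combination e1 - e2
  have h9 : ∀ y k, f1 (α * y + α * Φ k) = α * f1 y + α * ν := by
    intro y k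
    have e1 := (h7 0 0 k y).1
    rw [h8, sub_zero] at e1
    linear_combination e1
  obtain ⟨i, j, hij⟩ := hnc
  have h10 : ∀ x, f1 x = f1 0 := by
    intro x
    apply step_const f1 (α * (Φ i - Φ j)) (mul_ne_zero hα (sub_ne_zero.mpr hij))
    intro y
    have e1 := h9 (y / α - Φ j) i
    have e2 := h9 (y / α - Φ j) j
    rw [show α * (y / α - Φ j) + α * Φ i = y + α * (Φ i - Φ j) by field_simp; ring] at e1
    rw [show α * (y / α - Φ j) + α * Φ j = y by field_simp; ring] at e2
    rw [e1, e2]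
  have h11 : ∀ k, α * Φ' (k * μ) = α * (μ * Φ k) + (ν - α * ν) := by
    intro k
    have e1 := (h7 0 0 k 0).2
    rw [h8, h8, h10 0, sub_zero] at e1
    rw [show f1 0 + k * μ - (f1 0 + 0 * μ) = k * μ by ring] at e1
    linear_combination -e1
  have h12 : ν - α * ν = 0 := by
    by_cases h1 : α = 1
    · have := h9 0 0
      rw [h10 (_ + _)] at this
      rw [h1] at *; ring
    · have z1 := hΦ 0
      have z2 := hΦ' 0
      rw [mul_zero] at z1 z2
      have h1' : 1 - α ≠ 0 := fun h => h1 (by linear_combination -h)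
      have z1 : Φ 0 = 0 := mul_left_cancel₀ h1' (by linear_combination z1)
      have z2 : Φ' 0 = 0 := mul_left_cancel₀ h1' (by linear_combination z2)
      have := h11 0
      rw [zero_mul, z1, z2] at this
      linear_combination -this
  refine ⟨rfl, μ⁻¹, inv_ne_zero hμ0, fun A => ?_⟩
  have := h11 (μ⁻¹ * A)
  rw [h12, add_zero] at this
  have := mul_left_cancel₀ hα this
  rw [inv_inv, ← this]
  congr 1; field_simp

end Part2
end CS18


namespace CS18

/-- structure data of the left brace attached to a cycle set -/
structure Br (A X : Type) [AddCommGroup A] where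
  S : A → Equiv.Perm X
  L : A → A →+ A
  ι : X → A
  S_inj : Function.Injective S
  S_add : ∀ a b, S (a + b) = S (L a b) * S a
  L_ι : ∀ a x, L a (ι x) = ι (S a x)
  gen : AddSubmonoid.closure (Set.range ι) = ⊤

section build
variable {X : Type} (C : CycleSet X)

lemma lcomm : LeftCommutative (fun (x : X) (π : Equiv.Perm X) => C.sigma (π x) * π) := by
  refine ⟨fun x y π => ?_⟩
  ext z
  exact C.c1 (π y) (π x) (π z)

/-- the action of a multiset -/
noncomputable def MS (s : Multiset X) : Equiv.Perm X :=
  haveI := lcomm C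
  Multiset.foldr (fun (x : X) (π : Equiv.Perm X) => C.sigma (π x) * π) 1 s

lemma MS_zero : MS C 0 = 1 := rfl

lemma MS_cons (x : X) (s : Multiset X) : MS C (x ::ₘ s) = C.sigma (MS C s x) * MS C s := by
  haveI := lcomm C
  unfold MS
  rw [Multiset.foldr_cons]

lemma MS_add (s t : Multiset X) : MS C (s + t) = MS C (t.map (MS C s)) * MS C s := by
  induction t using Multiset.induction_on with
  | empty => simp [MS_zero]
  | cons x t ih =>
    rw [Multiset.add_cons, MS_cons, ih, Multiset.map_cons, MS_cons, mul_assoc]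
    rfl

/-- the congruence -/
def mcon : AddCon (Multiset X) where
  r s t := MS C s = MS C t
  iseqv := ⟨fun _ => rfl, fun h => h.symm, fun h h' => h.trans h'⟩
  add' := by
    intro s s' t t' h h'
    show MS C (s + t) = MS C (s' + t')
    rw [MS_add, h, ← MS_add, add_comm, MS_add, h', ← MS_add, add_comm]

lemma MS_map {s t t' : Multiset X} (h : MS C t = MS C t') :
    MS C (t.map (MS C s)) = MS C (t'.map (MS C s)) := by
  have h1 : MS C (s + t) = MS C (s + t') := by
    rw [add_comm, MS_add, h, ← MS_add, add_comm]
  rw [MS_add, MS_add] at h1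
  exact mul_right_cancel h1

lemma MS_map_pow {s t t' : Multiset X} (k : ℕ) (h : MS C t = MS C t') :
    MS C (t.map ((MS C s) ^ k : Equiv.Perm X)) = MS C (t'.map ((MS C s)^k : Equiv.Perm X)) := by
  induction k with
  | zero => simpa using h
  | succ k ih =>
    have := MS_map C (s := s) ih
    rw [Multiset.map_map, Multiset.map_map] at this
    rw [pow_succ']
    exact this

lemma MS_cancel [Finite X] {s t t' : Multiset X} (h : MS C (s + t) = MS C (s + t')) :
    MS C t = MS C t' := by
  rw [MS_add, MS_add] at h
  have h1 := MS_map_pow C (s := s) (orderOf (MS C s) - 1) (mul_right_cancel h)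
  rw [Multiset.map_map, Multiset.map_map, ← Equiv.Perm.coe_mul, ← pow_succ,
    Nat.sub_add_cancel (orderOf_pos _), pow_orderOf_eq_one] at h1
  simpa using h1

theorem exists_br [Finite X] : ∃ (A : Type) (_ : AddCommGroup A) (_ : Finite A) (B : Br A X),
    ∀ x, B.S (B.ι x) = C.sigma x := by
  let A := (mcon C).Quotient
  let S : A → Equiv.Perm X := Quotient.lift (MS C) (fun _ _ h => h)
  have Sinj : Function.Injective S := by
    rintro ⟨a⟩ ⟨b⟩ h
    exact Quotient.sound h
  haveI : Finite A := Finite.of_injective S Sinj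
  letI i1 : AddLeftCancelMonoid A :=
    { (inferInstance : AddCommMonoid A) with
      add_left_cancel := by
        rintro ⟨a⟩ ⟨b⟩ ⟨c⟩ h
        exact Quotient.sound (MS_cancel C (congrArg S h)) }
  letI i2 : AddGroup A := AddLeftCancelMonoid.addGroupOfFinite
  letI i3 : AddCommGroup A := { i2 with add_comm := (inferInstance : AddCommMonoid A).add_comm }
  have mkadd : ∀ s t : Multiset X, ((s + t : Multiset X) : (mcon C).Quotient)
      = ((s : (mcon C).Quotient) : A) + ((t : (mcon C).Quotient) : A) := fun _ _ => rfl
  let L : A → A → A := fun a => Quotient.lift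
    (fun t : Multiset X => ((t.map (S a) : Multiset X) : (mcon C).Quotient)) (by
      intro t t' h
      obtain ⟨s⟩ := a
      exact Quotient.sound (MS_map C (s := s) h))
  let L' : A → A →+ A := fun a => AddMonoidHom.mk' (L a) (by
    rintro ⟨s⟩ ⟨t⟩
    show (((s + t).map (S a) : Multiset X) : (mcon C).Quotient) = _
    rw [Multiset.map_add, mkadd])
  refine ⟨A, i3, inferInstance, ⟨S, L', fun x => (({x} : Multiset X) : (mcon C).Quotient), Sinj,
    ?_, ?_, ?_⟩, ?_⟩
  · rintro ⟨s⟩ ⟨t⟩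
    exact MS_add C s t
  · rintro a x
    show ((({x} : Multiset X).map (S a) : Multiset X) : (mcon C).Quotient) = _
    rw [Multiset.map_singleton]
  · rw [eq_top_iff]
    rintro ⟨s⟩ -
    induction s using Multiset.induction_on with
    | empty => exact zero_mem _
    | cons x t ih =>
      rw [← Multiset.singleton_add]
      exact add_mem (S := AddSubmonoid A)
        (AddSubmonoid.subset_closure (Set.mem_range_self x)) ih
  · intro x
    show MS C (x ::ₘ 0) = _
    rw [MS_cons]; simp [MS_zero]

end build

namespace Br
variable {A X : Type} [AddCommGroup A] (B : Br A X)

lemma S_zero : B.S 0 = 1 := by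
  have := B.S_add 0 0
  rw [add_zero, map_zero] at this
  simpa using this

lemma hom_ext {M : Type*} [AddMonoid M] (f g : A →+ M) (h : ∀ x, f (B.ι x) = g (B.ι x)) :
    f = g := by
  apply AddMonoidHom.eq_of_eqOn_denseM B.gen
  rintro _ ⟨x, rfl⟩
  exact h x

lemma L_zero : B.L 0 = AddMonoidHom.id A :=
  B.hom_ext _ _ (fun x => by rw [B.L_ι, S_zero]; rfl)

lemma L_add (a b c : A) : B.L (a + b) c = B.L (B.L a b) (B.L a c) := by
  have : B.L (a + b) = (B.L (B.L a b)).comp (B.L a) :=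
    B.hom_ext _ _ (fun x => by
      rw [AddMonoidHom.comp_apply, B.L_ι, B.L_ι, B.L_ι, B.S_add]; rfl)
  rw [this]; rfl

/-- inverse element for the multiplicative structure -/
def inv (a : A) : A := B.L a (-a)

lemma L_inv_L (a c : A) : B.L (B.inv a) (B.L a c) = c := by
  unfold inv
  rw [← L_add, add_neg_cancel, L_zero]; rfl

lemma S_inv (a : A) : B.S (B.inv a) = (B.S a)⁻¹ := by
  rw [eq_inv_iff_mul_eq_one]
  unfold inv
  rw [← S_add, add_neg_cancel, S_zero]

lemma inv_inv (a : A) : B.inv (B.inv a) = a := by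
  apply B.S_inj; rw [S_inv, S_inv, _root_.inv_inv]

lemma L_L_inv (a c : A) : B.L a (B.L (B.inv a) c) = c := by
  have := B.L_inv_L (B.inv a) c
  rwa [inv_inv] at this

lemma L_inj (a : A) : Function.Injective (B.L a) :=
  Function.LeftInverse.injective (B.L_inv_L a)

lemma S_mul (b a : A) : B.S b * B.S a = B.S (a + B.L (B.inv a) b) := by
  rw [B.S_add, L_L_inv]

/-- the image of an `L`-stable additive subgroup -/
def img (T : AddSubgroup A) (hT : ∀ a, ∀ b ∈ T, B.L a b ∈ T) : Subgroup (Equiv.Perm X) where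
  carrier := B.S '' T
  mul_mem' := by
    rintro _ _ ⟨b, hb, rfl⟩ ⟨a, ha, rfl⟩
    exact ⟨_, T.add_mem ha (hT _ _ hb), (B.S_mul b a).symm⟩
  one_mem' := ⟨0, T.zero_mem, B.S_zero⟩
  inv_mem' := by
    rintro _ ⟨a, ha, rfl⟩
    exact ⟨B.inv a, hT _ _ (T.neg_mem ha), B.S_inv a⟩

lemma card_img (T : AddSubgroup A) (hT : ∀ a, ∀ b ∈ T, B.L a b ∈ T) :
    Nat.card (B.img T hT) = Nat.card T :=
  Nat.card_image_of_injective B.S_inj _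

lemma transitive {C : CycleSet X} (hS : ∀ x, B.S (B.ι x) = C.sigma x) (hC : C.Indecomposable) 
    (x y : X) : ∃ a, B.S a x = y := by
  obtain ⟨g, hg, h⟩ := hC x y
  have : C.permGroup ≤ B.img ⊤ (fun _ _ _ => trivial) := by
    unfold CycleSet.permGroup
    rw [Subgroup.closure_le]
    rintro _ ⟨x, rfl⟩
    exact ⟨B.ι x, trivial, hS x⟩
  obtain ⟨a, -, rfl⟩ := this hg
  exact ⟨a, h⟩

lemma L_mul (a b c d : A) (h : B.S d = B.S a * B.S b) : B.L d c = B.L a (B.L b c) := by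
  rw [S_mul] at h
  rw [B.S_inj h, L_add, L_L_inv]

end Br
end CS18


namespace CS18
open Equiv

lemma card_of_orbits {G Y : Type*} [Group G] [MulAction G Y] [Finite Y] (c : ℕ)
    (h : ∀ y : Y, Nat.card (MulAction.orbit G y) = c) :
    Nat.card Y = Nat.card (MulAction.orbitRel.Quotient G Y) * c := by
  classical
  have : Finite (MulAction.orbitRel.Quotient G Y) := Quotient.finite _
  have := Fintype.ofFinite (MulAction.orbitRel.Quotient G Y)
  rw [Nat.card_congr (MulAction.selfEquivSigmaOrbits G Y), Nat.card_sigma]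
  simp only [h]
  simp

/-- action of `H` on the fibres of `r` -/
@[reducible] def qAct {X Z : Type*} (H : Subgroup (Perm X)) (r : X → Z)
    (hc : ∀ h ∈ H, ∀ x y, r x = r y → r (h x) = r (h y)) :
    MulAction H (Quotient (Setoid.ker r)) where
  smul h := Quotient.map h.1 (fun x y hxy => hc h.1 h.2 x y hxy)
  one_smul := by rintro ⟨x⟩; rfl
  mul_smul := by rintro g h ⟨x⟩; rfl

lemma card_ker {X Z : Type*} (r : X → Z) :
    Nat.card (Quotient (Setoid.ker r)) = Nat.card (Set.range r) :=
  Nat.card_congr (Setoid.quotientKerEquivRange r)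

theorem lemmaH {X Z : Type*} [Finite X] (H : Subgroup (Perm X)) (r : X → Z)
    (hc : ∀ h ∈ H, ∀ x y, r x = r y → r (h x) = r (h y))
    (cop : (Nat.card H).Coprime (Nat.card (Set.range r)))
    (hg : ∀ x y, ∃ g : Perm X, r (g x) = r y ∧ (∀ u v, r u = r v → r (g u) = r (g v)) ∧
      ∀ h ∈ H, ∃ h' ∈ H, ∀ u, r (g (h u)) = r (h' (g u))) :
    ∀ h ∈ H, ∀ x, r (h x) = r x := by
  letI := qAct H r hc
  let Y := Quotient (Setoid.ker r)
  have : Finite Y := Quotient.finite _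
  have le : ∀ x y : Y, Nat.card (MulAction.orbit H x) ≤ Nat.card (MulAction.orbit H y) := by
    intro x y
    obtain ⟨x, rfl⟩ := Quotient.exists_rep x
    obtain ⟨y, rfl⟩ := Quotient.exists_rep y
    obtain ⟨g, hgx, hgc, hgn⟩ := hg x y
    let gb : Y → Y := Quotient.map g (fun u v h => hgc u v h)
    have gs : Function.Surjective gb := by
      rintro ⟨u⟩
      exact ⟨Quotient.mk _ (g⁻¹ u), by
        show Quotient.mk _ (g (g⁻¹ u)) = _
        rw [← Perm.mul_apply, mul_inv_cancel]; rfl⟩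
    have gi : Function.Injective gb := Finite.injective_iff_surjective.mpr gs
    have mm : ∀ u : MulAction.orbit H (Quotient.mk _ x : Y),
        gb u.1 ∈ MulAction.orbit H (Quotient.mk _ y : Y) := by
      rintro ⟨_, ⟨h, rfl⟩⟩
      obtain ⟨h', hh', e⟩ := hgn h.1 h.2
      refine ⟨⟨h', hh'⟩, ?_⟩
      show (Quotient.mk _ (h' y) : Y) = Quotient.mk _ (g (h.1 x))
      apply Quotient.sound
      show r _ = r _
      rw [e]
      exact (hc h' hh' _ _ hgx).symm
    refine Nat.card_le_card_of_injective
      (fun u : MulAction.orbit H (Quotient.mk _ x : Y) => (⟨gb u.1, mm u⟩ :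
        MulAction.orbit H (Quotient.mk _ y : Y))) ?_
    · intro u v huv
      exact Subtype.ext (gi (congrArg Subtype.val huv))
  intro h hh x
  have hcard := card_of_orbits (G := H) (Y := Y) (Nat.card (MulAction.orbit H (Quotient.mk _ x : Y)))
    (fun y => le_antisymm (le _ _) (le _ _))
  have d1 : Nat.card (MulAction.orbit H (Quotient.mk _ x : Y)) ∣ Nat.card (Set.range r) := by
    rw [← card_ker, hcard]; exact dvd_mul_left _ _
  have d2 : Nat.card (MulAction.orbit H (Quotient.mk _ x : Y)) ∣ Nat.card H := by
    rw [Nat.card_coe_set_eq, ← MulAction.index_stabilizer]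
    exact Subgroup.index_dvd_card _
  have h1 := Nat.eq_one_of_dvd_coprimes cop d2 d1
  have : Subsingleton (MulAction.orbit H (Quotient.mk _ x : Y)) :=
    (Nat.card_eq_one_iff_unique.mp h1).1
  have e : (⟨(⟨h, hh⟩ : H) • (Quotient.mk _ x : Y), MulAction.mem_orbit _ _⟩ :
    MulAction.orbit H (Quotient.mk _ x : Y)) = ⟨Quotient.mk _ x, MulAction.mem_orbit_self _⟩ :=
    Subsingleton.elim _ _
  exact Quotient.exact (congrArg Subtype.val e)

theorem lemmaC {X Z : Type*} [Finite X] {p : ℕ} [Fact p.Prime] (P : Subgroup (Perm X))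
    (hP : IsPGroup p P) (htr : ∀ x y, ∃ g ∈ P, g x = y) (r : X → Z)
    (hc : ∀ h ∈ P, ∀ x y, r x = r y → r (h x) = r (h y))
    (hr : Nat.card (Set.range r) = p) :
    ∃ ρ : X → ZMod p, (∀ g ∈ P, ∀ x y, ρ (g x) - ρ x = ρ (g y) - ρ y) ∧
      (∀ x y, ρ x = ρ y ↔ r x = r y) ∧ Function.Surjective ρ := by
  letI := qAct P r hc
  let Y := Quotient (Setoid.ker r)
  have hY : Nat.card Y = p := by rw [card_ker, hr]
  have : Nonempty X := by
    by_contra h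
    rw [not_nonempty_iff] at h
    have : Nat.card (Set.range r) = 0 := by
      rw [Set.range_eq_empty]; simp
    rw [hr] at this
    exact (Fact.out : p.Prime).ne_zero this
  obtain ⟨x0⟩ := this
  let y0 : Y := Quotient.mk _ x0
  haveI : MulAction.IsPretransitive P Y := ⟨by
    rintro ⟨x⟩ ⟨y⟩
    obtain ⟨g, hg, e⟩ := htr x y
    exact ⟨⟨g, hg⟩, congrArg (Quotient.mk (Setoid.ker r)) e⟩⟩
  have hind := MulAction.index_stabilizer_of_transitive P y0
  rw [hY] at hind
  obtain ⟨n, hn⟩ := IsPGroup.iff_card.mp hP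
  have hn0 : n ≠ 0 := by
    rintro rfl
    have := Subgroup.index_dvd_card (MulAction.stabilizer P y0)
    rw [hind, hn, pow_zero] at this
    exact (Fact.out : p.Prime).one_lt.ne' (Nat.dvd_one.mp this)
  haveI : (MulAction.stabilizer P y0).Normal := by
    apply Subgroup.normal_of_index_eq_minFac_card
    rw [hind, hn, Nat.Prime.pow_minFac Fact.out hn0]
  have hq : Nat.card (P ⧸ MulAction.stabilizer P y0) = p := hind
  have hz : Nat.card (Multiplicative (ZMod p)) = p := by simp
  let φ := mulEquivOfPrimeCardEq hq hz
  let s : P → ZMod p := fun g => Multiplicative.toAdd (φ (QuotientGroup.mk g))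
  have smul : ∀ g h, s (g * h) = s g + s h := by
    intro g h
    simp only [s, QuotientGroup.mk_mul, map_mul, toAdd_mul]
  have seq : ∀ g h : P, s g = s h ↔ r (g.1 x0) = r (h.1 x0) := by
    intro g h
    have : s g = s h ↔ (QuotientGroup.mk g : P ⧸ MulAction.stabilizer P y0) = QuotientGroup.mk h := by
      simp only [s]
      rw [Multiplicative.toAdd.injective.eq_iff, φ.injective.eq_iff]
    rw [this, QuotientGroup.eq, MulAction.mem_stabilizer_iff, mul_smul, inv_smul_eq_iff]
    constructor
    · intro e
      exact (Quotient.exact e).symm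
    · intro e
      exact Quotient.sound e.symm
  choose t ht ht' using fun x => htr x0 x
  refine ⟨fun x => s ⟨t x, ht x⟩, ?_, ?_, ?_⟩
  · have key : ∀ g (hg : g ∈ P) x, s ⟨t (g x), ht _⟩ = s ⟨g, hg⟩ + s ⟨t x, ht x⟩ := by
      intro g hg x
      rw [← smul, seq]
      show r (t (g x) x0) = r (g (t x x0))
      rw [ht', ht']
    intro g hg x y
    simp only [key g hg]; ring
  · intro x y
    simp only [seq, ht']
  · intro c
    obtain ⟨w, hw⟩ := φ.surjective (Multiplicative.ofAdd c)
    obtain ⟨g, rfl⟩ := QuotientGroup.mk_surjective w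
    refine ⟨g.1 x0, ?_⟩
    have : s g = c := congrArg Multiplicative.toAdd hw
    rw [← this]
    exact (seq _ _).mpr (by rw [ht'])

theorem lemmaE {X : Type*} [Finite X] {p : ℕ} [Fact p.Prime] (P : Subgroup (Perm X))
    (hP : IsPGroup p P) (htr : ∀ x y, ∃ g ∈ P, g x = y) (hX : Nat.card X = p ^ 2) :
    ∃ (z : Perm X) (ρ : X → ZMod p), z ∈ P ∧ (∀ g ∈ P, g * z = z * g) ∧ orderOf z = p ∧
      (∀ g ∈ P, ∀ x y, ρ (g x) - ρ x = ρ (g y) - ρ y) ∧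
      (∀ x y, ρ x = ρ y ↔ ∃ k : ℕ, x = (z ^ k) y) ∧ (∀ k : ℕ, ∀ x, (z ^ k) x = x → p ∣ k) ∧ Function.Surjective ρ := by
  have hpp : p.Prime := Fact.out
  have hne : Nontrivial X := by
    rw [← Finite.one_lt_card_iff_nontrivial, hX]
    exact Nat.one_lt_pow two_ne_zero hpp.one_lt
  obtain ⟨x0, x1, h01⟩ := hne
  haveI : Nontrivial P := by
    obtain ⟨g, hg, e⟩ := htr x0 x1
    refine ⟨⟨g, hg⟩, 1, ?_⟩
    intro h
    rw [Subtype.ext_iff] at h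
    simp only [Subgroup.coe_one] at h
    rw [h] at e
    exact h01 e
  have hcn := hP.center_nontrivial
  have hcp : IsPGroup p (Subgroup.center P) := hP.to_subgroup _
  obtain ⟨n, hn0, hn⟩ := hcp.nontrivial_iff_card.mp hcn
  obtain ⟨w, hw⟩ := exists_prime_orderOf_dvd_card' (G := Subgroup.center P) p
    (hn ▸ dvd_pow_self _ (by omega))
  let z : Perm X := w.1.1
  have hzo : orderOf z = p := by
    rw [← hw, ← Subgroup.orderOf_coe w, ← Subgroup.orderOf_coe w.1]
  have hzc : ∀ g ∈ P, g * z = z * g := by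
    intro g hg
    have := (Subgroup.mem_center_iff.mp w.2) ⟨g, hg⟩
    exact congrArg Subtype.val this
  have hfree : ∀ k : ℕ, ∀ x, (z ^ k) x = x → p ∣ k := by
    intro k x h
    rw [← hzo, orderOf_dvd_iff_pow_eq_one]
    ext y
    obtain ⟨g, hg, rfl⟩ := htr x y
    have hcm : Commute g (z ^ k) := Commute.pow_right (hzc g hg) k
    rw [← Perm.mul_apply, ← hcm.eq, Perm.mul_apply, h]; rfl
  let Zp := Subgroup.zpowers z
  let r : X → MulAction.orbitRel.Quotient Zp X := Quotient.mk _
  have horb : ∀ x : X, Nat.card (MulAction.orbit Zp x) = p := by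
    intro x
    rw [Nat.card_coe_set_eq, ← MulAction.index_stabilizer]
    have : MulAction.stabilizer Zp x = ⊥ := by
      rw [eq_bot_iff]
      rintro ⟨g, hg⟩ hs
      obtain ⟨k, hk⟩ := (mem_powers_iff_mem_zpowers.mpr hg)
      simp only at hk
      rw [MulAction.mem_stabilizer_iff] at hs
      have : g x = x := hs
      rw [← hk] at this
      have := hfree k x this
      rw [← hzo, orderOf_dvd_iff_pow_eq_one, hk] at this
      rw [Subgroup.mem_bot]
      exact Subtype.ext this
    rw [this, Subgroup.index_bot, Nat.card_zpowers, hzo]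
  have hrcard : Nat.card (Set.range r) = p := by
    have h1 := card_of_orbits (G := Zp) (Y := X) p horb
    rw [hX, pow_two] at h1
    have : Set.range r = Set.univ := Set.range_eq_univ.mpr Quotient.mk_surjective
    rw [this, Nat.card_congr (Equiv.Set.univ _)]
    exact (Nat.eq_of_mul_eq_mul_right hpp.pos h1).symm
  have req : ∀ x y, r x = r y ↔ ∃ k : ℕ, x = (z ^ k) y := by
    intro x y
    constructor
    · intro h
      have h := Quotient.exact h
      obtain ⟨⟨g, hg⟩, e⟩ := h
      obtain ⟨k, hk⟩ := (mem_powers_iff_mem_zpowers.mpr hg)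
      refine ⟨k, ?_⟩
      simp only at hk
      rw [hk]; exact e.symm
    · rintro ⟨k, rfl⟩
      apply Quotient.sound
      exact ⟨⟨z ^ k, Subgroup.pow_mem _ (Subgroup.mem_zpowers z) k⟩, rfl⟩
  obtain ⟨ρ, h1, h2, h3⟩ := lemmaC P hP htr r (by
    intro h hh x y hxy
    rw [req] at hxy ⊢
    obtain ⟨k, rfl⟩ := hxy
    have hcm : Commute h (z ^ k) := Commute.pow_right (hzc h hh) k
    refine ⟨k, ?_⟩
    rw [← Perm.mul_apply, hcm.eq]; rfl) hrcard
  exact ⟨z, ρ, w.1.2, hzc, hzo, h1, fun x y => (h2 x y).trans (req x y), hfree, h3⟩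

/-- coordinates -/
theorem lemmaE2 {X : Type*} [Finite X] {p : ℕ} [Fact p.Prime] (P : Subgroup (Perm X))
    (hX : Nat.card X = p ^ 2)
    (z : Perm X) (ρ : X → ZMod p) (hzP : z ∈ P) (hzc : ∀ g ∈ P, g * z = z * g)
    (hzo : orderOf z = p)
    (hρ : ∀ g ∈ P, ∀ x y, ρ (g x) - ρ x = ρ (g y) - ρ y)
    (hb : ∀ x y, ρ x = ρ y ↔ ∃ k : ℕ, x = (z ^ k) y)
    (hfree : ∀ k : ℕ, ∀ x, (z ^ k) x = x → p ∣ k)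
    (τ : Perm X) (hτ : τ ∈ P) (hτ1 : ∀ x, ρ (τ x) = ρ x + 1) :
    ∃ E : ZMod p × ZMod p ≃ X, (∀ a b x y, ρ (E (a, x)) - ρ (E (b, y)) = a - b) ∧
      (∀ g ∈ P, ∀ s, (∀ x, ρ (g x) = ρ x + s) →
        ∃ f : ZMod p → ZMod p, ∀ b y, g (E (b, y)) = E (b + s, y + f b)) ∧
      (∀ b y, z (E (b, y)) = E (b, y + 1)) ∧
      (τ ^ p = 1 → ∀ b y, τ (E (b, y)) = E (b + 1, y)) := by
  have hpp : p.Prime := Fact.out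
  have hne : Nonempty X := by
    apply (Nat.card_pos_iff.mp (hX ▸ pow_pos hpp.pos 2)).1
  obtain ⟨c0⟩ := hne
  let e : ZMod p × ZMod p → X := fun u => (τ ^ u.1.val) ((z ^ u.2.val) c0)
  have hzk : ∀ k x, ρ ((z ^ k) x) = ρ x := fun k x => (hb _ _).mpr ⟨k, rfl⟩
  have hτk : ∀ (k : ℕ) x, ρ ((τ ^ k) x) = ρ x + k := by
    intro k x
    induction k with
    | zero => simp
    | succ k ih => rw [pow_succ', Perm.mul_apply, hτ1, ih]; push_cast; ring
  have he : ∀ a x, ρ (e (a, x)) = ρ c0 + a := by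
    intro a x
    simp only [e]
    rw [hτk, hzk, ZMod.natCast_zmod_val]
  have zmod : ∀ k : ℕ, z ^ k = z ^ ((k : ZMod p).val) := by
    intro k
    rw [ZMod.val_natCast]
    conv_lhs => rw [← pow_mod_orderOf, hzo]
  have zc : ∀ g ∈ P, ∀ (k : ℕ) x, g ((z ^ k) x) = (z ^ k) (g x) := by
    intro g hg k x
    have hcm : Commute g (z ^ k) := Commute.pow_right (hzc g hg) k
    rw [← Perm.mul_apply, hcm.eq]; rfl
  have hτP : ∀ k : ℕ, τ ^ k ∈ P := fun k => Subgroup.pow_mem _ hτ k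
  have ez : ∀ (k : ℕ) a x, (z ^ k) (e (a, x)) = e (a, x + k) := by
    intro k a x
    simp only [e]
    rw [← zc _ (hτP _), ← Perm.mul_apply (z ^ k), ← pow_add, zmod (k + x.val)]
    congr 4
    push_cast
    rw [ZMod.natCast_zmod_val]; ring
  have einj : Function.Injective e := by
    rintro ⟨a, x⟩ ⟨b, y⟩ h
    have h1 : a = b := by
      have := congrArg ρ h
      rw [he, he] at this
      exact add_left_cancel this
    subst h1
    have h2 := (τ ^ a.val).injective h
    simp only at h2
    have h3 : z ^ (y.val) = z ^ ((y - x).val + x.val) := by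
      rw [zmod ((y - x).val + x.val)]
      congr 2
      push_cast
      simp
    rw [h3, pow_add, Perm.mul_apply] at h2
    have h4 := hfree _ _ h2.symm
    rw [← ZMod.natCast_eq_zero_iff, ZMod.natCast_zmod_val, sub_eq_zero] at h4
    rw [h4]
  have ebij : Function.Bijective e := by
    have := Fintype.ofFinite X
    rw [Fintype.bijective_iff_injective_and_card]
    refine ⟨einj, ?_⟩
    rw [← Nat.card_eq_fintype_card, ← Nat.card_eq_fintype_card, hX]
    simp [pow_two]
  refine ⟨Equiv.ofBijective e ebij, ?_, ?_, ?_, ?_⟩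
  · intro a b x y
    show ρ (e _) - ρ (e _) = _
    rw [he, he]; ring
  · intro g hg s hs
    have h1 : ∀ b, ∃ k : ℕ, g (e (b, 0)) = (z ^ k) (e (b + s, 0)) := by
      intro b
      rw [← hb, hs, he, he]; ring
    choose k hk using h1
    refine ⟨fun b => k b, fun b y => ?_⟩
    show g (e _) = e _
    have h2 := ez y.val b 0
    rw [zero_add, ZMod.natCast_zmod_val] at h2
    rw [← h2, zc g hg, hk, ez, ez]
    simp [add_comm]
  · intro b y
    show z (e _) = e _
    have := ez 1 b y
    simpa using this
  · intro hp1 b y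
    show τ (e _) = e _
    simp only [e]
    rw [← Perm.mul_apply, ← pow_succ']
    congr 1
    have : (b + 1).val = (b.val + 1) % p := by
      have : b + 1 = ((b.val + 1 : ℕ) : ZMod p) := by push_cast; simp
      rw [this, ZMod.val_natCast]
    rw [this]
    conv_lhs => rw [← Nat.div_add_mod (b.val + 1) p, pow_add, pow_mul, hp1, one_pow, one_mul]

end CS18


namespace CS18
open Equiv

/-- brace with primary decomposition, acting on a set of size `p^2` -/
structure PB (p : ℕ) (A X : Type) [AddCommGroup A] extends Br A X where
  Bp : AddSubgroup A
  Q : AddSubgroup A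
  πp : A →+ A
  πq : A →+ A
  π_add : ∀ a, πp a + πq a = a
  πp_mem : ∀ a, πp a ∈ Bp
  πq_mem : ∀ a, πq a ∈ Q
  πp_of : ∀ a ∈ Bp, πp a = a
  πp_L : ∀ a b, πp (L a b) = L a (πp b)
  πq_L : ∀ a b, πq (L a b) = L a (πq b)
  BL : ∀ a, ∀ b ∈ Bp, L a b ∈ Bp
  QL : ∀ a, ∀ b ∈ Q, L a b ∈ Q
  cardBp : ∃ n, Nat.card Bp = p ^ n
  cardQ : (Nat.card Q).Coprime p
  ι_inj : Function.Injective ι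
  trP : ∀ x y, ∃ h ∈ Bp, S h x = y
  cardX : Nat.card X = p ^ 2

lemma trans_of_index {X : Type*} [Finite X] (P G : Subgroup (Perm X)) (hPG : P ≤ G)
    (hG : ∀ x y, ∃ g ∈ G, g x = y) (k : ℕ) (hk : Nat.card G = Nat.card P * k)
    (cop : k.Coprime (Nat.card X)) : ∀ x y, ∃ g ∈ P, g x = y := by
  intro x y
  let St := MulAction.stabilizer (Perm X) x
  have oP : St.relIndex P = (MulAction.orbit P x).ncard := by
    rw [← MulAction.index_stabilizer]; rfl
  have oG : St.relIndex G = Nat.card X := by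
    have : (MulAction.orbit G x) = Set.univ := by
      ext y; simp only [Set.mem_univ, iff_true]
      obtain ⟨g, hg, e⟩ := hG x y
      exact ⟨⟨g, hg⟩, e⟩
    rw [← Set.ncard_univ, ← this, ← MulAction.index_stabilizer]; rfl
  have e1 := Subgroup.relIndex_mul_relIndex (St ⊓ P) P G inf_le_right hPG
  have e2 := Subgroup.relIndex_mul_relIndex (St ⊓ P) (St ⊓ G) G
    (inf_le_inf_left _ hPG) inf_le_right
  rw [Subgroup.inf_relIndex_right] at e1 e2
  have e3 : P.relIndex G = k := by
    have := Subgroup.card_mul_index (P.subgroupOf G)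
    rw [Nat.card_congr (Subgroup.subgroupOfEquivOfLe hPG).toEquiv, hk] at this
    exact Nat.eq_of_mul_eq_mul_left Nat.card_pos this
  rw [e3, oP, ← e2, oG] at e1
  have d : Nat.card X ∣ (MulAction.orbit P x).ncard :=
    (Nat.Coprime.symm cop).dvd_of_dvd_mul_right (Dvd.intro_left _ e1.symm)
  have hpos : 0 < (MulAction.orbit P x).ncard :=
    (Set.ncard_pos).mpr ⟨x, MulAction.mem_orbit_self x⟩
  have : MulAction.orbit P x = Set.univ := by
    apply Set.eq_of_subset_of_ncard_le (Set.subset_univ _)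
    rw [Set.ncard_univ]
    exact Nat.le_of_dvd hpos d
  have hy : y ∈ MulAction.orbit P x := this ▸ Set.mem_univ y
  obtain ⟨g, e⟩ := hy
  exact ⟨g.1, g.2, e⟩

theorem exists_pb {X A : Type} [AddCommGroup A] [Finite A] [Finite X] {p : ℕ} [Fact p.Prime]
    (B : Br A X) (C : CycleSet X) (hB : ∀ x, B.S (B.ι x) = C.sigma x) (hX : Nat.card X = p ^ 2)
    (hC : C.Indecomposable) (hI : C.Irretractable) :
    ∃ B' : PB p A X, B'.toBr = B := by
  have hpp : p.Prime := Fact.out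
  obtain ⟨v, m, hm, hcard⟩ := Nat.exists_eq_pow_mul_and_not_dvd (n := Nat.card A)
    Nat.card_pos.ne' p hpp.ne_one
  have cop : Nat.Coprime (p ^ v) m := Nat.Coprime.pow_left v ((Nat.Prime.coprime_iff_not_dvd hpp).mpr hm)
  have cop' := Nat.isCoprime_iff_coprime.mpr cop
  obtain ⟨u, w, huw⟩ := cop'
  have tor : ∀ a : A, (p ^ v * m) • a = 0 := fun a => by
    rw [← hcard]; exact card_nsmul_eq_zero'
  let Bp : AddSubgroup A := (nsmulAddMonoidHom (p ^ v)).ker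
  let Q : AddSubgroup A := (nsmulAddMonoidHom m).ker
  have mBp : ∀ a, a ∈ Bp ↔ p ^ v • a = 0 := fun a => Iff.rfl
  have mQ : ∀ a, a ∈ Q ↔ m • a = 0 := fun a => Iff.rfl
  let πp : A →+ A := zsmulAddGroupHom (w * m)
  let πq : A →+ A := zsmulAddGroupHom (u * (p ^ v : ℕ))
  have eπp : ∀ a, πp a = (w * m) • a := fun _ => rfl
  have eπq : ∀ a, πq a = (u * (p ^ v : ℕ)) • a := fun _ => rfl
  have hadd : ∀ a, πp a + πq a = a := by
    intro a
    rw [eπp, eπq, ← add_zsmul, add_comm, huw, one_zsmul]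
  have hpm : ∀ a, πp a ∈ Bp := by
    intro a
    rw [mBp, eπp, ← natCast_zsmul, smul_smul,
      show ((p ^ v : ℕ) : ℤ) * (w * m) = w * ((p ^ v * m : ℕ) : ℤ) by push_cast; ring,
      ← smul_smul, natCast_zsmul, tor, smul_zero]
  have hqm : ∀ a, πq a ∈ Q := by
    intro a
    rw [mQ, eπq, ← natCast_zsmul, smul_smul,
      show ((m : ℕ) : ℤ) * (u * (p ^ v : ℕ)) = u * ((p ^ v * m : ℕ) : ℤ) by push_cast; ring,
      ← smul_smul, natCast_zsmul, tor, smul_zero]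
  have hqz : ∀ a ∈ Bp, πq a = 0 := by
    intro a ha
    rw [mBp] at ha
    rw [eπq, ← smul_smul, natCast_zsmul, ha, smul_zero]
  have hpz : ∀ a ∈ Q, πp a = 0 := by
    intro a ha
    rw [mQ] at ha
    rw [eπp, ← smul_smul, natCast_zsmul, ha, smul_zero]
  have hpof : ∀ a ∈ Bp, πp a = a := by
    intro a ha
    have := hadd a
    rwa [hqz a ha, add_zero] at this
  have BL : ∀ a, ∀ b ∈ Bp, B.L a b ∈ Bp := by
    intro a b hb
    rw [mBp] at hb ⊢
    rw [← map_nsmul, hb, map_zero]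
  have QL : ∀ a, ∀ b ∈ Q, B.L a b ∈ Q := by
    intro a b hb
    rw [mQ] at hb ⊢
    rw [← map_nsmul, hb, map_zero]
  have cBp : ∃ n, Nat.card Bp = p ^ n := by
    have : IsPGroup p (Multiplicative Bp) := by
      intro g
      refine ⟨v, ?_⟩
      have h1 := (Multiplicative.toAdd g).2
      rw [mBp] at h1
      apply Multiplicative.toAdd.injective
      apply Subtype.ext
      simpa using h1
    have h2 := IsPGroup.iff_card.mp this
    exact h2
  have cQ : (Nat.card Q).Coprime p := by
    rw [Nat.coprime_comm, Nat.Prime.coprime_iff_not_dvd hpp]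
    intro hd
    obtain ⟨g, hg⟩ := exists_prime_addOrderOf_dvd_card' (G := Q) p hd
    apply hm
    rw [← hg, addOrderOf_dvd_iff_nsmul_eq_zero]
    exact Subtype.ext g.2
  have cA : Nat.card A = Nat.card Bp * Nat.card Q := by
    rw [← Nat.card_prod]
    apply Nat.card_congr
    refine ⟨fun a => (⟨πp a, hpm a⟩, ⟨πq a, hqm a⟩), fun u => u.1.1 + u.2.1, hadd, ?_⟩
    rintro ⟨⟨a, ha⟩, ⟨b, hb⟩⟩
    have hqof : πq b = b := by
      have := hadd b
      rwa [hpz b hb, zero_add] at this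
    ext <;> simp [hqz a ha, hpz b hb, hpof a ha, hqof]
  have inj : Function.Injective B.ι := by
    intro x y h
    apply hI
    have : C.sigma x = C.sigma y := by rw [← hB, ← hB, h]
    exact congrArg (fun f : Perm X => (f : X → X)) this
  have tr : ∀ x y, ∃ h ∈ Bp, B.S h x = y := by
    intro x y
    obtain ⟨g, ⟨h, hh, rfl⟩, e⟩ := trans_of_index (B.img Bp BL) (B.img ⊤ (fun _ _ _ => trivial))
      (by rintro _ ⟨a, ha, rfl⟩; exact ⟨a, trivial, rfl⟩)
      (fun x y => by
        obtain ⟨a, ha⟩ := B.transitive hB hC x y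
        exact ⟨_, ⟨a, trivial, rfl⟩, ha⟩) (Nat.card Q)
      (by rw [B.card_img Bp BL, ← cA, ← AddSubgroup.card_top (G := A)]; exact B.card_img ⊤ _)
      (by rw [hX]; exact Nat.Coprime.pow_right 2 cQ) x y
    exact ⟨h, hh, e⟩
  refine ⟨⟨B, Bp, Q, πp, πq, hadd, hpm, hqm, hpof, ?_, ?_, BL, QL, cBp, cQ, inj, tr, hX⟩, rfl⟩
  · intro a b
    rw [eπp, eπp, map_zsmul]
  · intro a b
    rw [eπq, eπq, map_zsmul]

namespace PB
variable {p : ℕ} [Fact p.Prime] {A X : Type} [AddCommGroup A] [Finite A] [Finite X] (B : PB p A X)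

/-- the `p`-component of `ι` -/
def ιp (x : X) : A := B.πp (B.ι x)
/-- the prime-to-p component of `ι` -/
def ιq (x : X) : A := B.πq (B.ι x)

lemma ιp_mem (x : X) : B.ιp x ∈ B.Bp := B.πp_mem _
lemma ιq_mem (x : X) : B.ιq x ∈ B.Q := B.πq_mem _
lemma ι_eq (x : X) : B.ι x = B.ιp x + B.ιq x := (B.π_add _).symm

lemma L_ιp (a : A) (x : X) : B.L a (B.ιp x) = B.ιp (B.S a x) := by
  unfold ιp; rw [← B.πp_L, B.L_ι]

lemma L_ιq (a : A) (x : X) : B.L a (B.ιq x) = B.ιq (B.S a x) := by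
  unfold ιq; rw [← B.πq_L, B.L_ι]

lemma Bp_induct (R : A → Prop) (h0 : R 0) (hι : ∀ x, R (B.ιp x))
    (hadd : ∀ a ∈ B.Bp, ∀ b ∈ B.Bp, R a → R b → R (a + b)) (a : A) (ha : a ∈ B.Bp) : R a := by
  rw [← B.πp_of a ha]
  have : a ∈ AddSubmonoid.closure (Set.range B.ι) := by rw [B.gen]; trivial
  clear ha
  induction this using AddSubmonoid.closure_induction with
  | mem x hx => obtain ⟨x, rfl⟩ := hx; exact hι x
  | zero => rw [map_zero]; exact h0
  | add a b _ _ h1 h2 => rw [map_add]; exact hadd _ (B.πp_mem _) _ (B.πp_mem _) h1 h2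

/-- the Sylow-type subgroup -/
def P : Subgroup (Perm X) := B.img B.Bp B.BL

lemma P_pgroup : IsPGroup p B.P := by
  obtain ⟨n, hn⟩ := B.cardBp
  apply IsPGroup.of_card (n := n)
  rw [← hn]; exact B.card_img _ _

lemma P_trans (x y : X) : ∃ g ∈ B.P, g x = y := by
  obtain ⟨h, hh, e⟩ := B.trP x y
  exact ⟨_, ⟨h, hh, rfl⟩, e⟩

lemma S_mem_P {h : A} (hh : h ∈ B.Bp) : B.S h ∈ B.P := ⟨h, hh, rfl⟩

/-- elements of `Q` fixing `T` pointwise -/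
def fixQ (T : Set A) : Subgroup (Perm X) where
  carrier := B.S '' {q | q ∈ B.Q ∧ ∀ c ∈ T, B.L q c = c}
  mul_mem' := by
    rintro _ _ ⟨b, ⟨hb, hb'⟩, rfl⟩ ⟨a, ⟨ha, ha'⟩, rfl⟩
    refine ⟨_, ⟨B.Q.add_mem ha (B.QL _ _ hb), fun c hc => ?_⟩, (B.S_mul b a).symm⟩
    rw [B.L_mul b a c _ (B.S_mul b a).symm, ha' c hc, hb' c hc]
  one_mem' := ⟨0, ⟨B.Q.zero_mem, fun c hc => by rw [B.L_zero]; rfl⟩, B.S_zero⟩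
  inv_mem' := by
    rintro _ ⟨a, ⟨ha, ha'⟩, rfl⟩
    refine ⟨B.inv a, ⟨B.QL _ _ (B.Q.neg_mem ha), fun c hc => ?_⟩, B.S_inv a⟩
    have := B.L_inv_L a c
    rwa [ha' c hc] at this

lemma card_fixQ (T : Set A) : (Nat.card (B.fixQ T)).Coprime p := by
  have h : B.fixQ T ≤ B.img B.Q B.QL := by
    rintro _ ⟨a, ⟨ha, _⟩, rfl⟩
    exact ⟨a, ha, rfl⟩
  have := Subgroup.card_dvd_of_le h
  rw [B.card_img] at this
  exact Nat.Coprime.coprime_dvd_left this B.cardQ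

/-- if `L_q h = h` then `S h S q = S (L_h q) S h` -/
lemma S_comm (q h : A) (hq : B.L q h = h) : B.S h * B.S q = B.S (B.L h q) * B.S h := by
  have := B.S_add q h
  rw [add_comm, B.S_add, hq] at this
  exact this.symm

lemma L_comm (q h c : A) (hq : B.L q h = h) : B.L (B.L h q) (B.L h c) = B.L h (B.L q c) := by
  rw [← B.L_add, add_comm, B.L_add, hq]

theorem lemmaI (q : A) (hq : q ∈ B.Q) (h : ∀ b ∈ B.Bp, B.L q b = b) : q = 0 := by
  have := lemmaH (B.fixQ B.Bp) (id : X → X) (fun _ _ _ _ h => by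
      simp only [id] at h; rw [h])
    (by
      rw [Set.range_id, Nat.card_congr (Equiv.Set.univ X), B.cardX]
      exact Nat.Coprime.pow_right 2 (B.card_fixQ _))
    (by
      intro x y
      obtain ⟨g, hg, e⟩ := B.trP x y
      refine ⟨B.S g, congrArg _ e, fun u v h => by simp only [id] at h; rw [h], ?_⟩
      rintro _ ⟨q, ⟨hq, hq'⟩, rfl⟩
      refine ⟨_, ⟨B.L g q, ⟨B.QL _ _ hq, fun c hc => ?_⟩, rfl⟩, fun u => ?_⟩
      · have := B.L_comm q g (B.L (B.inv g) c) (hq' g hg)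
        rw [B.L_L_inv, hq' _ (B.BL _ _ hc), B.L_L_inv] at this
        exact this
      · exact congrArg (fun f : Perm X => f u) (B.S_comm q g (hq' g hg)))
    (B.S q) ⟨q, ⟨hq, h⟩, rfl⟩
  apply B.S_inj
  rw [B.S_zero]
  ext x
  exact this x

lemma L_id_of_ιp (q : A) (h : ∀ x, B.L q (B.ιp x) = B.ιp x) : ∀ b ∈ B.Bp, B.L q b = b :=
  B.Bp_induct _ (map_zero _) h (fun a _ b _ h1 h2 => by rw [map_add, h1, h2])

lemma ιp_inj_of_Q (h : ∀ q ∈ B.Q, q = 0) : Function.Injective B.ιp := by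
  intro x y hxy
  apply B.ι_inj
  rw [B.ι_eq, B.ι_eq, hxy, h _ (B.ιq_mem x), h _ (B.ιq_mem y)]

lemma card_range_ιp : ∃ k ≤ 2, Nat.card (Set.range B.ιp) = p ^ k := by
  have hc : ∀ h ∈ B.P, ∀ x y, B.ιp x = B.ιp y → B.ιp (h x) = B.ιp (h y) := by
    rintro _ ⟨h, hh, rfl⟩ x y e
    rw [← B.L_ιp, e, B.L_ιp]
  letI := qAct B.P B.ιp hc
  haveI : MulAction.IsPretransitive B.P (Quotient (Setoid.ker B.ιp)) := ⟨by
    rintro ⟨x⟩ ⟨y⟩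
    obtain ⟨g, hg, e⟩ := B.P_trans x y
    exact ⟨⟨g, hg⟩, congrArg (Quotient.mk (Setoid.ker B.ιp)) e⟩⟩
  have hne : Nonempty X := by
    apply (Nat.card_pos_iff.mp (B.cardX ▸ pow_pos (Fact.out : p.Prime).pos 2)).1
  obtain ⟨x0⟩ := hne
  have h1 := MulAction.index_stabilizer_of_transitive B.P (Quotient.mk (Setoid.ker B.ιp) x0)
  rw [card_ker] at h1
  obtain ⟨n, hn⟩ := IsPGroup.iff_card.mp B.P_pgroup
  have h2 := Subgroup.index_dvd_card
    (MulAction.stabilizer B.P (Quotient.mk (Setoid.ker B.ιp) x0))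
  rw [h1, hn, Nat.dvd_prime_pow Fact.out] at h2
  obtain ⟨k, _, hk⟩ := h2
  refine ⟨k, ?_, hk⟩
  have h3 : Nat.card (Set.range B.ιp) ≤ Nat.card X := Finite.card_range_le _
  rw [hk, B.cardX] at h3
  exact (Nat.pow_le_pow_iff_right (Fact.out : p.Prime).one_lt).mp h3

lemma case_p (hr : Nat.card (Set.range B.ιp) = p) : Function.Injective B.ιp := by
  have hc : ∀ h x y, B.ιp x = B.ιp y → B.ιp (B.S h x) = B.ιp (B.S h y) := by
    rintro h x y e
    rw [← B.L_ιp, e, B.L_ιp]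
  obtain ⟨ρ, h1, h2, surj⟩ := lemmaC B.P B.P_pgroup B.P_trans B.ιp
    (by rintro _ ⟨h, hh, rfl⟩ x y e; exact hc h x y e) hr
  have hne : Nonempty X := by
    apply (Nat.card_pos_iff.mp (B.cardX ▸ pow_pos (Fact.out : p.Prime).pos 2)).1
  obtain ⟨x0⟩ := hne
  let s : A → ZMod p := fun h => ρ (B.S h x0) - ρ x0
  have hs : ∀ h ∈ B.Bp, ∀ x, ρ (B.S h x) = ρ x + s h := by
    intro h hh x
    have := h1 _ (B.S_mem_P hh) x x0
    simp only [s]; rw [← this]; ring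
  have sadd : ∀ a ∈ B.Bp, ∀ b ∈ B.Bp, s (a + b) = s (B.L a b) + s a := by
    intro a ha b hb
    have e1 := hs _ (B.BL a b hb) (B.S a x0)
    have e2 := hs _ ha x0
    have e3 : ρ (B.S (a + b) x0) = ρ (B.S (B.L a b) (B.S a x0)) := by rw [B.S_add]; rfl
    have e4 := hs _ (B.Bp.add_mem ha hb) x0
    linear_combination e3 + e1 + e2 - e4
  choose κ hκ using surj
  have tκ : ∀ x, s (B.ιp x) = s (B.ιp (κ (ρ x))) := by
    intro x
    rw [(h2 x (κ (ρ x))).mp (hκ _).symm]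
  have Tc : ∀ a b, s (B.ιp (κ a)) = s (B.ιp (κ b)) := by
    intro a b
    refine PL2 (fun a _ => s (B.ιp (κ a))) ?_ a b 0
    intro a b _ _
    have e1 := sadd _ (B.ιp_mem (κ a)) _ (B.ιp_mem (κ b))
    have e2 := sadd _ (B.ιp_mem (κ b)) _ (B.ιp_mem (κ a))
    rw [B.L_ιp, tκ, hs _ (B.ιp_mem _), hκ] at e1 e2
    rw [← e1, ← e2, add_comm]
  have tc : ∀ x y, s (B.ιp x) = s (B.ιp y) := fun x y => by rw [tκ x, tκ y]; exact Tc _ _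
  have s0 : s 0 = 0 := by simp only [s]; rw [B.S_zero]; simp
  have sL : ∀ h ∈ B.Bp, ∀ c, s (B.L c h) = s h := by
    apply B.Bp_induct
    · intro c; rw [map_zero]
    · intro x c; rw [B.L_ιp]; exact tc _ _
    · intro a ha b hb i1 i2 c
      rw [map_add, sadd _ (B.BL _ _ ha) _ (B.BL _ _ hb), i1, sadd _ ha _ hb,
        ← B.L_mul _ _ _ _ (B.S_mul _ _).symm, i2, i2]
  have hQ : ∀ q ∈ B.Q, ∀ x, B.ιp (B.S q x) = B.ιp x := by
    intro q hq x
    refine lemmaH (B.img B.Q B.QL) B.ιp ?_ ?_ ?_ (B.S q) ⟨q, hq, rfl⟩ x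
    · rintro _ ⟨h, hh, rfl⟩ x y e; exact hc h x y e
    · rw [hr, B.card_img]; exact B.cardQ
    · intro x y
      obtain ⟨h, hh, e⟩ := B.trP x y
      refine ⟨B.S h, congrArg _ e, hc h, ?_⟩
      rintro _ ⟨q, hq, rfl⟩
      refine ⟨_, ⟨B.L (B.L (B.inv q) h) q, B.QL _ _ hq, rfl⟩, fun u => ?_⟩
      have e1 : B.S h * B.S q = B.S (B.L (B.L (B.inv q) h) q) * B.S (B.L (B.inv q) h) := by
        rw [B.S_mul, add_comm, B.S_add]
      have e2 : B.S h (B.S q u) = B.S (B.L (B.L (B.inv q) h) q) (B.S (B.L (B.inv q) h) u) :=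
        congrArg (fun f : Perm X => f u) e1
      rw [e2]
      apply hc
      rw [← h2, hs _ (B.BL _ _ hh), hs _ hh, sL _ hh]
  apply B.ιp_inj_of_Q
  intro q hq
  exact B.lemmaI q hq (B.L_id_of_ιp q (fun x => by rw [B.L_ιp, hQ q hq]))

theorem ιp_inj : Function.Injective B.ιp := by
  obtain ⟨k, hk, h⟩ := B.card_range_ιp
  have hk : k = 0 ∨ k = 1 ∨ k = 2 := by omega
  rcases hk with rfl | rfl | rfl
  · rw [pow_zero] at h
    have hss := (Nat.card_eq_one_iff_unique.mp h).1
    have hcst : ∀ x y, B.ιp x = B.ιp y := fun x y =>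
      congrArg Subtype.val (Subsingleton.elim (⟨_, ⟨x, rfl⟩⟩ : Set.range B.ιp) ⟨_, ⟨y, rfl⟩⟩)
    apply B.ιp_inj_of_Q
    intro q hq
    exact B.lemmaI q hq (B.L_id_of_ιp q (fun x => by rw [B.L_ιp]; exact hcst _ _))
  · rw [pow_one] at h
    exact B.case_p h
  · rw [← B.cardX, ← card_ker] at h
    have hs : Function.Surjective (Quotient.mk (Setoid.ker B.ιp)) := Quotient.mk_surjective
    have hb := (Nat.bijective_iff_surjective_and_card _).mpr ⟨hs, h.symm⟩
    intro x y hxy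
    exact hb.1 (Quotient.sound hxy)

end PB
end CS18


namespace CS18
open Equiv
namespace PB
variable {p : ℕ} [Fact p.Prime] {A X : Type} [AddCommGroup A] [Finite A] [Finite X] (B : PB p A X)

/-- fixed points of `L` on the `p`-part -/
def F : AddSubgroup A where
  carrier := {n | n ∈ B.Bp ∧ ∀ h ∈ B.Bp, B.L h n = n}
  add_mem' := by
    rintro a b ⟨ha, ha'⟩ ⟨hb, hb'⟩
    exact ⟨B.Bp.add_mem ha hb, fun h hh => by rw [map_add, ha' h hh, hb' h hh]⟩
  zero_mem' := ⟨B.Bp.zero_mem, fun h _ => map_zero _⟩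
  neg_mem' := by
    rintro a ⟨ha, ha'⟩
    exact ⟨B.Bp.neg_mem ha, fun h hh => by rw [map_neg, ha' h hh]⟩

lemma hneX (B : PB p A X) : Nonempty X := by
  apply (Nat.card_pos_iff.mp (B.cardX ▸ pow_pos (Fact.out : p.Prime).pos 2)).1

lemma dvd_cardBp : p ∣ Nat.card B.Bp := by
  obtain ⟨n, hn⟩ := B.cardBp
  rcases Nat.eq_zero_or_pos n with rfl | h
  · exfalso
    rw [pow_zero] at hn
    have hs := (Nat.card_eq_one_iff_unique.mp hn).1
    have : Subsingleton X := ⟨fun x y => by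
      obtain ⟨h, hh, e⟩ := B.trP x y
      have : h = 0 := congrArg Subtype.val (Subsingleton.elim (⟨h, hh⟩ : B.Bp) 0)
      rw [this, B.S_zero] at e
      exact e⟩
    have h1 := B.cardX
    have h2 : Nat.card X ≤ 1 := Finite.card_le_one_iff_subsingleton.mpr this
    have h3 := Nat.one_lt_pow (n := 2) (by norm_num) (Fact.out : p.Prime).one_lt
    omega
  · rw [hn]; exact dvd_pow_self p h.ne'

/-- brace action as an action of the permutation group -/
@[reducible] noncomputable def actBp (T : AddSubgroup A) (hT : ∀ a, ∀ b ∈ T, B.L a b ∈ T) :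
    MulAction B.P T where
  smul g b := ⟨B.L (Classical.choose g.2) b, hT _ _ b.2⟩
  one_smul b := by
    apply Subtype.ext
    have h := Classical.choose_spec (1 : B.P).2
    have h0 : Classical.choose (1 : B.P).2 = 0 := B.S_inj (by rw [h.2, B.S_zero]; rfl)
    show B.L (Classical.choose (1 : B.P).2) b = b
    rw [h0, B.L_zero]; rfl
  mul_smul g g' b := by
    apply Subtype.ext
    have h1 := Classical.choose_spec g.2
    have h2 := Classical.choose_spec g'.2
    have h3 := Classical.choose_spec (g * g').2
    exact B.L_mul _ _ _ _ (by rw [h1.2, h2.2, h3.2]; rfl)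

lemma actBp_smul (T : AddSubgroup A) (hT : ∀ a, ∀ b ∈ T, B.L a b ∈ T) (h : A) (hh : h ∈ B.Bp)
    (b : T) : ((B.actBp T hT).toSMul.smul ⟨B.S h, B.S_mem_P hh⟩ b : A) = B.L h b := by
  have h1 := Classical.choose_spec (B.S_mem_P hh)
  have h2 : Classical.choose (B.S_mem_P hh) = h := B.S_inj h1.2
  show B.L (Classical.choose (B.S_mem_P hh)) b = _
  rw [h2]

lemma exists_F : ∃ n ∈ B.F, n ≠ 0 := by
  letI := B.actBp B.Bp B.BL
  obtain ⟨b, hb, hne⟩ := IsPGroup.exists_fixed_point_of_prime_dvd_card_of_fixed_point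
    (p := p) B.P_pgroup B.Bp (B.dvd_cardBp) (a := 0) (by
      rintro ⟨_, h, hh, rfl⟩
      apply Subtype.ext
      exact (B.actBp_smul B.Bp B.BL h hh 0).trans (map_zero (B.L h)))
  refine ⟨b, ⟨b.2, fun h hh => ?_⟩, fun e => hne (Subtype.ext e.symm)⟩
  rw [← B.actBp_smul B.Bp B.BL h hh b]
  exact congrArg Subtype.val (hb ⟨_, B.S_mem_P hh⟩)

lemma F_comm (n : A) (hn : n ∈ B.F) (u : X) :
    B.S (B.ιp (B.S n u)) * B.S n = B.S n * B.S (B.ιp u) := by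
  rw [← B.L_ιp, ← B.S_add, add_comm, B.S_add, hn.2 _ (B.ιp_mem u)]

lemma σ_comm (u v : X) : B.S (B.ιp (B.S (B.ιp u) v)) * B.S (B.ιp u) =
    B.S (B.ιp (B.S (B.ιp v) u)) * B.S (B.ιp v) := by
  rw [← B.L_ιp, ← B.S_add, add_comm, B.S_add, B.L_ιp]

lemma S_nsmul (n : A) (hn : n ∈ B.F) (k : ℕ) : B.S (k • n) = B.S n ^ k := by
  induction k with
  | zero => simpa using B.S_zero
  | succ k ih => rw [succ_nsmul, B.S_add, hn.2 _ (B.Bp.nsmul_mem hn.1 k), ih, pow_succ']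

theorem coords : ∃ n ∈ B.F, n ≠ 0 ∧ p • n = 0 ∧ (∀ n' ∈ B.F, ∃ k : ℕ, n' = k • n) ∧
    ∃ (E : ZMod p × ZMod p ≃ X) (Φ : ZMod p → ZMod p), (∀ k, Φ (-k) = Φ k) ∧
      (∃ i j, Φ i ≠ Φ j) ∧ (∀ b y, B.S n (E (b, y)) = E (b + 1, y)) ∧
      (∀ a x b y, B.S (B.ιp (E (a, x))) (E (b, y)) = E (b + x, y + Φ (b - a))) ∧
      (∀ b y, B.ιp (E (b, y)) + n = B.ιp (E (b, y + 1))) ∧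
      (∀ h ∈ B.Bp, ∃ (s : ZMod p) (f : ZMod p → ZMod p), ∀ b y, B.S h (E (b, y)) = E (b + s, y + f b)) := by
  obtain ⟨z, ρ, hzP, hzc, hzo, hρ, hb, hfree, surj⟩ := lemmaE B.P B.P_pgroup B.P_trans B.cardX
  obtain ⟨x0⟩ := B.hneX
  let s : A → ZMod p := fun h => ρ (B.S h x0) - ρ x0
  have hs : ∀ h ∈ B.Bp, ∀ x, ρ (B.S h x) = ρ x + s h := by
    intro h hh x
    have := hρ _ (B.S_mem_P hh) x x0
    simp only [s]; rw [← this]; ring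
  have sadd : ∀ a ∈ B.F, ∀ b ∈ B.F, s (a + b) = s a + s b := by
    intro a ha b hb
    have e1 := hs _ hb.1 (B.S a x0)
    have e2 := hs _ ha.1 x0
    have e3 : ρ (B.S (a + b) x0) = ρ (B.S b (B.S a x0)) := by
      rw [B.S_add, hb.2 _ ha.1]; rfl
    have e4 := hs _ (B.Bp.add_mem ha.1 hb.1) x0
    linear_combination e3 + e1 + e2 - e4
  have inj : ∀ u v, (∀ w, B.S (B.ιp u) w = B.S (B.ιp v) w) → u = v := by
    intro u v h
    exact B.ιp_inj (B.S_inj (Equiv.ext h))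
  -- general coordinate facts
  have gen : ∀ E : ZMod p × ZMod p ≃ X,
      (∀ g ∈ B.P, ∀ s, (∀ x, ρ (g x) = ρ x + s) → ∃ f : ZMod p → ZMod p, ∀ b y,
        g (E (b,y)) = E (b+s, y + f b)) →
      ∃ (S' : ZMod p → ZMod p → ZMod p) (f : ZMod p → ZMod p → ZMod p → ZMod p),
        (∀ a x b y, B.S (B.ιp (E (a, x))) (E (b, y)) = E (b + S' a x, y + f a x b)) ∧
        (∀ a x a' x', S' a x = S' a' x' → (∀ b, f a x b = f a' x' b) → a = a' ∧ x = x') ∧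
        (∀ a x b y, S' (b + S' a x) (y + f a x b) + S' a x
          = S' (a + S' b y) (x + f b y a) + S' b y) ∧
        (∀ a x b y c, f (b + S' a x) (y + f a x b) (c + S' a x) + f a x c
          = f (a + S' b y) (x + f b y a) (c + S' b y) + f b y c) := by
    intro E hE
    have : ∀ a x, ∃ f : ZMod p → ZMod p, ∀ b y, B.S (B.ιp (E (a, x))) (E (b, y)) =
        E (b + s (B.ιp (E (a, x))), y + f b) := fun a x =>
      hE _ (B.S_mem_P (B.ιp_mem _)) _ (hs _ (B.ιp_mem _))
    choose f hf using this
    have key : ∀ a x b y c, E (c + s (B.ιp (E (a, x))) + s (B.ιp (E (b + s (B.ιp (E (a, x))), y + f a x b))),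
        0 + f a x c + f (b + s (B.ιp (E (a, x)))) (y + f a x b) (c + s (B.ιp (E (a, x))))) = 
        E (c + s (B.ιp (E (b, y))) + s (B.ιp (E (a + s (B.ιp (E (b, y))), x + f b y a))),
        0 + f b y c + f (a + s (B.ιp (E (b, y)))) (x + f b y a) (c + s (B.ιp (E (b, y))))) := by
      intro a x b y c
      have := congrArg (fun g : Perm X => g (E (c, 0))) (B.σ_comm (E (a, x)) (E (b, y)))
      simp only [Perm.mul_apply] at this
      rw [hf, hf, hf, hf, hf, hf] at this
      exact this
    refine ⟨fun a x => s (B.ιp (E (a, x))), f, hf, ?_, ?_, ?_⟩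
    · intro a x a' x' h1 h2
      beta_reduce at h1
      have := inj (E (a, x)) (E (a', x')) (fun w => by
        obtain ⟨⟨b, y⟩, rfl⟩ := E.surjective w
        rw [hf, hf, h1, h2])
      have := E.injective this
      rw [Prod.mk.injEq] at this
      exact this
    · intro a x b y
      have := congrArg Prod.fst (E.injective (key a x b y 0))
      simp only at this
      linear_combination this
    · intro a x b y c
      have := congrArg Prod.snd (E.injective (key a x b y c))
      simp only at this
      linear_combination this
  -- s injective on F
  have sF : ∀ n ∈ B.F, s n = 0 → n = 0 := by
    intro n hn hn0
    obtain ⟨x1, hx1⟩ := surj (ρ x0 + 1)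
    obtain ⟨t, ht, e⟩ := B.trP x0 x1
    have st : s t = 1 := by simp only [s]; rw [e, hx1]; ring
    obtain ⟨E, _, hE, _, _⟩ := lemmaE2 B.P B.cardX z ρ hzP hzc hzo hρ hb hfree (B.S t)
      (B.S_mem_P ht) (fun x => by rw [hs t ht, st])
    obtain ⟨S', f, h1, h2, h3, h4⟩ := gen E hE
    obtain ⟨m, hm⟩ := hE _ (B.S_mem_P hn.1) 0 (fun x => by rw [hs n hn.1, hn0])
    by_contra hne
    have key : ∀ a x b, E (b + 0 + S' (a + 0) (x + m a), 0 + m b + f (a + 0) (x + m a) (b + 0)) =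
        E (b + S' a x + 0, 0 + f a x b + m (b + S' a x)) := by
      intro a x b
      have := congrArg (fun g : Perm X => g (E (b, 0))) (B.F_comm n hn (E (a, x)))
      simp only [Perm.mul_apply] at this
      rw [hm, hm, h1, h1, hm] at this
      exact this
    refine K1 S' f m ?_ h2 h3 h4 ?_ ?_
    · by_contra hcon
      push Not at hcon
      apply hne
      apply B.S_inj
      rw [B.S_zero]
      ext w
      obtain ⟨⟨b, y⟩, rfl⟩ := E.surjective w
      rw [hm, hcon]; simp
    · intro a x
      have := congrArg Prod.fst (E.injective (key a x 0))
      simp only [add_zero] at this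
      linear_combination this
    · intro a x b
      have := congrArg Prod.snd (E.injective (key a x b))
      simp only [add_zero] at this
      linear_combination this
  have snsmul : ∀ n ∈ B.F, ∀ k : ℕ, s (k • n) = k * s n := by
    intro n hn k
    induction k with
    | zero => simp [s, B.S_zero]
    | succ k ih =>
      rw [succ_nsmul, sadd _ (B.F.nsmul_mem hn k) _ hn, ih]; push_cast; ring
  obtain ⟨n0, hn0, hn0'⟩ := B.exists_F
  have hsn0 : s n0 ≠ 0 := fun h => hn0' (sF _ hn0 h)
  obtain ⟨n, hn, hsn⟩ : ∃ n ∈ B.F, s n = 1 := by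
    refine ⟨((s n0)⁻¹).val • n0, B.F.nsmul_mem hn0 _, ?_⟩
    rw [snsmul _ hn0, ZMod.natCast_zmod_val, inv_mul_cancel₀ hsn0]
  have hpn : p • n = 0 := sF _ (B.F.nsmul_mem hn _) (by rw [snsmul _ hn]; simp)
  have hFn : ∀ n' ∈ B.F, ∃ k : ℕ, n' = k • n := by
    intro n' hn'
    refine ⟨(s n').val, ?_⟩
    have hk := B.F.nsmul_mem hn (s n').val
    have hd := B.F.sub_mem hn' hk
    have e1 := sadd _ hd _ hk
    rw [sub_add_cancel, snsmul _ hn, ZMod.natCast_zmod_val, hsn] at e1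
    exact sub_eq_zero.mp (sF _ hd (by linear_combination -e1))
  refine ⟨n, hn, ?_, hpn, hFn, ?_⟩
  · rintro rfl
    simp [s, B.S_zero] at hsn
  obtain ⟨E, _, hE, _, hτ⟩ := lemmaE2 B.P B.cardX z ρ hzP hzc hzo hρ hb hfree (B.S n)
      (B.S_mem_P hn.1) (fun x => by rw [hs n hn.1, hsn])
  have hτ := hτ (by rw [← B.S_nsmul n hn, hpn, B.S_zero])
  obtain ⟨S', f, h1, h2, h3, h4⟩ := gen E hE
  have key : ∀ a x b, E (b + 1 + S' (a + 1) x, 0 + f (a + 1) x (b + 1)) =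
      E (b + S' a x + 1, 0 + f a x b) := by
    intro a x b
    have := congrArg (fun g : Perm X => g (E (b, 0))) (B.F_comm n hn (E (a, x)))
    simp only [Perm.mul_apply] at this
    rw [hτ, hτ, h1, h1, hτ] at this
    exact this
  have eS : ∀ a x, S' a x = S' 0 x := by
    intro a x
    refine step_const (fun a => S' a x) 1 one_ne_zero (fun a => ?_) a 0
    have := congrArg Prod.fst (E.injective (key a x 0))
    simp only at this ⊢
    linear_combination this
  have ef : ∀ a x b, f a x b = f 0 x (b - a) := by
    intro a x b
    have := step_const (fun a' => f a' x (b - a + a')) 1 one_ne_zero (fun a' => ?_) a 0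
    · simpa using this
    have := congrArg Prod.snd (E.injective (key a' x (b - a + a')))
    simp only at this ⊢
    rw [← add_assoc]
    linear_combination this
  obtain ⟨Φ, μ, ν, hμ, k1, k2, k3, k4⟩ := K2 (S' 0) (f 0) (by
      intro a x a' x' e1 e2
      apply h2
      · rw [eS, eS a', e1]
      · intro b; rw [ef, ef a', e2])
    (by
      intro x y k
      have := h3 0 x k y
      rw [eS, eS (0 + _), ef 0 x, ef k, eS k, sub_zero, zero_sub] at this
      exact this)
    (by
      intro x y P R
      have := h4 (-P) x (-R) y 0
      rw [ef (-R + _), ef (-P + _), ef (-P) x, ef (-R) y, eS (-P), eS (-R), ef (-P), ef (-R)] at this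
      convert this using 3 <;> ring_nf)
  let ψ : ZMod p ≃ ZMod p := ⟨fun x => (x - ν) / μ, fun x => μ * x + ν,
    fun x => by field_simp; ring, fun x => by field_simp; ring⟩
  have hψ : ∀ x, ψ x = (x - ν) / μ := fun _ => rfl
  have hE' : ∀ b y, ((Equiv.refl (ZMod p)).prodCongr ψ).trans E (b, y) = E (b, (y - ν) / μ) :=
    fun _ _ => rfl
  refine ⟨((Equiv.refl _).prodCongr ψ).trans E, fun k => μ * Φ k, ?_, ?_, ?_, ?_, ?_, ?_⟩
  · intro k; simp only [k3]
  · obtain ⟨i, j, hij⟩ := k4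
    exact ⟨i, j, fun h => hij (mul_left_cancel₀ hμ h)⟩
  · intro b y
    rw [hE', hE', hτ]
  · intro a x b y
    rw [hE', hE', hE', h1, eS, ef, k1, k2]
    congr 2
    · field_simp; ring
    · field_simp; ring
  · intro b y
    apply B.S_inj
    rw [B.S_add, hn.2 _ (B.ιp_mem _)]
    ext w
    obtain ⟨⟨c, v⟩, rfl⟩ := E.surjective w
    rw [Perm.mul_apply, hE', hE', h1, h1, hτ, eS, ef, k1, k2, eS, ef b, k1, k2]
    congr 2
    field_simp; ring
  · intro h hh
    obtain ⟨m, hm⟩ := hE _ (B.S_mem_P hh) (s h) (hs h hh)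
    refine ⟨s h, fun b => μ * m b, fun b y => ?_⟩
    rw [hE', hE', hm]
    congr 2
    field_simp; ring

end PB
end CS18


namespace CS18
open Equiv
namespace PB
variable {p : ℕ} [Fact p.Prime] {A X : Type} [AddCommGroup A] [Finite A] [Finite X] (B : PB p A X)

/-- coordinates -/
structure Coord (B : PB p A X) (n : A) (E : ZMod p × ZMod p ≃ X) (Φ : ZMod p → ZMod p) : Prop where
  nF : n ∈ B.F
  n0 : n ≠ 0
  pn : p • n = 0
  Fn : ∀ n' ∈ B.F, ∃ k : ℕ, n' = k • n
  ev : ∀ k, Φ (-k) = Φ k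
  nc : ∃ i j, Φ i ≠ Φ j
  Sn : ∀ b y, B.S n (E (b, y)) = E (b + 1, y)
  Sι : ∀ a x b y, B.S (B.ιp (E (a, x))) (E (b, y)) = E (b + x, y + Φ (b - a))
  ιn : ∀ b y, B.ιp (E (b, y)) + n = B.ιp (E (b, y + 1))
  SB : ∀ h ∈ B.Bp, ∃ (s : ZMod p) (f : ZMod p → ZMod p), ∀ b y, B.S h (E (b, y)) = E (b + s, y + f b)

theorem exists_coord : ∃ n E Φ, B.Coord n E Φ := by
  obtain ⟨n, h1, h2, h3, h4, E, Φ, h5, h6, h7, h8, h9, h10⟩ := B.coords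
  exact ⟨n, E, Φ, h1, h2, h3, h4, h5, h6, h7, h8, h9, h10⟩

namespace Coord
variable {B} {n : A} {E : ZMod p × ZMod p ≃ X} {Φ : ZMod p → ZMod p} 

lemma Skn (c : B.Coord n E Φ) (k : ℕ) (b y : ZMod p) : B.S (k • n) (E (b, y)) = E (b + k, y) := by
  rw [B.S_nsmul n c.nF]
  induction k with
  | zero => simp
  | succ k ih => rw [pow_succ', Perm.mul_apply, ih, c.Sn]; congr 2; push_cast; ring

lemma nsmul_eq (c : B.Coord n E Φ) {k l : ℕ} (h : (k : ZMod p) = l) : k • n = l • n := by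
  apply B.S_inj
  ext w
  obtain ⟨⟨b, y⟩, rfl⟩ := E.surjective w
  rw [c.Skn, c.Skn, h]

lemma ιkn (c : B.Coord n E Φ) (k : ℕ) (b y : ZMod p) : B.ιp (E (b, y)) + k • n = B.ιp (E (b, y + k)) := by
  induction k with
  | zero => simp
  | succ k ih => rw [succ_nsmul, ← add_assoc, ih, c.ιn]; congr 3; push_cast; ring

lemma Lqn (c : B.Coord n E Φ) (hp2 : p ≠ 2) (q : A) : ∃ k : ℕ, B.L q n = k • n := by
  obtain ⟨t, m, hm⟩ := c.SB _ (B.BL q n c.nF.1)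
  have h1 : ∀ w, ∃ v, B.S (B.ιp w) * B.S (B.L q n) = B.S (B.ιp v) := by
    intro w
    obtain ⟨u, rfl⟩ := (B.S (B.L q n)).surjective w
    obtain ⟨u, rfl⟩ := (B.S q).surjective u
    obtain ⟨⟨b, y⟩, rfl⟩ := E.surjective u
    refine ⟨B.S q (E (b, y + 1)), ?_⟩
    rw [← B.L_ιp, ← B.S_add, ← B.L_ιp, ← map_add, add_comm, c.ιn, B.L_ιp]
  have hm0 : ∀ b, m b = 0 := by
    apply W hp2 Φ m c.ev
    intro a
    obtain ⟨v, hv⟩ := h1 (E (a + t, 0))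
    obtain ⟨⟨a', x'⟩, rfl⟩ := E.surjective v
    refine ⟨a', fun b => ?_⟩
    have := congrArg (fun g : Perm X => g (E (b, 0))) hv
    simp only [Perm.mul_apply] at this
    rw [hm, c.Sι, c.Sι] at this
    have := congrArg Prod.snd (E.injective this)
    simp only at this
    rw [show b + t - (a + t) = b - a by ring] at this
    linear_combination this
  refine ⟨t.val, B.S_inj ?_⟩
  ext w
  obtain ⟨⟨b, y⟩, rfl⟩ := E.surjective w
  rw [hm, c.Skn, hm0, ZMod.natCast_zmod_val, add_zero]

lemma Sq_form (c : B.Coord n E Φ) (q : A) (k : ℕ) (h : B.L q n = k • n) :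
    ∃ (β m : ZMod p → ZMod p), ∀ b y, B.S q (E (b, y)) = E (β b, k * y + m b) := by
  have key : ∀ b (j : ℕ), B.S q (E (b, j)) = 
      E ((E.symm (B.S q (E (b, 0)))).1, k * j + (E.symm (B.S q (E (b, 0)))).2) := by
    intro b j
    induction j with
    | zero => simp
    | succ j ih =>
      apply B.ιp_inj
      push_cast
      rw [← B.L_ιp, ← c.ιn, map_add, h, B.L_ιp, ih, c.ιkn]
      congr 3; ring
  refine ⟨fun b => (E.symm (B.S q (E (b, 0)))).1, fun b => (E.symm (B.S q (E (b, 0)))).2,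
    fun b y => ?_⟩
  have := key b y.val
  rwa [ZMod.natCast_zmod_val] at this

lemma fix_zero (c : B.Coord n E Φ) (q : A) (hq : q ∈ B.Q) (hqn : B.L q n = n) : q = 0 := by
  have hmem : B.S q ∈ B.fixQ {n} := ⟨q, ⟨hq, fun c hc => by rw [Set.mem_singleton_iff.mp hc, hqn]⟩, rfl⟩
  have form : ∀ q, B.L q n = n → ∃ (β m : ZMod p → ZMod p), ∀ b y,
      B.S q (E (b, y)) = E (β b, y + m b) := by
    intro q hqn
    obtain ⟨β, m, h⟩ := c.Sq_form q 1 (by rw [hqn, one_nsmul])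
    exact ⟨β, m, fun b y => by rw [h]; simp⟩
  have hr := lemmaH (B.fixQ {n}) (fun x => (E.symm x).1) ?_ ?_ ?_ (B.S q) hmem
  · obtain ⟨β, m, hm⟩ := form q hqn
    have hβ : ∀ b, β b = b := by
      intro b
      have := hr (E (b, 0))
      rw [hm] at this
      simpa using this
    have hpow : ∀ (k : ℕ) b y, (B.S q ^ k) (E (b, y)) = E (b, y + k * m b) := by
      intro k b y
      induction k with
      | zero => simp
      | succ k ih => rw [pow_succ', Perm.mul_apply, ih, hm, hβ]; congr 2; push_cast; ring
    have h1 : B.S q ^ p = 1 := by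
      ext w
      obtain ⟨⟨b, y⟩, rfl⟩ := E.surjective w
      rw [hpow]; simp
    have h2 : B.S q ^ (Nat.card (B.fixQ {n})) = 1 := by
      have := pow_card_eq_one' (G := B.fixQ {n}) (x := ⟨_, hmem⟩)
      exact congrArg Subtype.val this
    have h3 := orderOf_dvd_of_pow_eq_one h1
    have h4 := orderOf_dvd_of_pow_eq_one h2
    have h5 := Nat.eq_one_of_dvd_coprimes (B.card_fixQ {n}) h4 h3
    apply B.S_inj
    rw [B.S_zero, orderOf_eq_one_iff.mp h5]
  · rintro _ ⟨q, ⟨hq, hqn⟩, rfl⟩ x y e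
    obtain ⟨β, m, hm⟩ := form q (hqn n rfl)
    obtain ⟨⟨b, y⟩, rfl⟩ := E.surjective y
    obtain ⟨⟨b', y'⟩, rfl⟩ := E.surjective x
    simp only [Equiv.symm_apply_apply] at e
    rw [hm, hm, e]; simp
  · have : Set.range (fun x => (E.symm x).1) = Set.univ := by
      apply Set.range_eq_univ.mpr
      intro b
      exact ⟨E (b, 0), by simp⟩
    rw [this, Nat.card_congr (Equiv.Set.univ _), Nat.card_zmod]
    exact B.card_fixQ _
  · intro x y
    obtain ⟨⟨b, y⟩, rfl⟩ := E.surjective y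
    obtain ⟨⟨b', y'⟩, rfl⟩ := E.surjective x
    refine ⟨B.S ((b - b').val • n), ?_, ?_, ?_⟩
    · rw [c.Skn]; simp
    · intro u v e
      obtain ⟨⟨b, y⟩, rfl⟩ := E.surjective u
      obtain ⟨⟨b', y'⟩, rfl⟩ := E.surjective v
      simp only [Equiv.symm_apply_apply] at e
      rw [c.Skn, c.Skn, e]; simp
    · rintro _ ⟨q, ⟨hq, hqn⟩, rfl⟩
      have hqn := hqn n rfl
      set t := (b - b').val • n with ht
      have e1 : B.L q t = t := by rw [ht, map_nsmul, hqn]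
      have tB : t ∈ B.Bp := B.Bp.nsmul_mem c.nF.1 _
      refine ⟨_, ⟨B.L t q, ⟨B.QL _ _ hq, ?_⟩, rfl⟩, fun u => ?_⟩
      · intro d hd
        rw [Set.mem_singleton_iff.mp hd]
        have := B.L_comm q t n e1
        rwa [hqn, c.nF.2 t tB] at this
      · have := congrArg (fun g : Perm X => g u) (B.S_comm q t e1)
        simp only [Perm.mul_apply] at this
        rw [this]

lemma cardQ_lt (c : B.Coord n E Φ) (hp2 : p ≠ 2) : Nat.card B.Q < p := by
  choose k hk using c.Lqn hp2
  have hinj : ∀ q ∈ B.Q, ∀ q' ∈ B.Q, B.L q n = B.L q' n → q = q' := by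
    intro q hq q' hq' e
    have e1 := B.S_mul (B.inv q) q'
    have hd : q' + B.L (B.inv q') (B.inv q) ∈ B.Q :=
      B.Q.add_mem hq' (B.QL _ _ (B.QL _ _ (B.Q.neg_mem hq)))
    have := c.fix_zero _ hd (by
      rw [B.L_mul _ _ _ _ e1.symm, ← e, B.L_inv_L])
    rw [this, B.S_zero, B.S_inv] at e1
    exact B.S_inj (inv_mul_eq_one.mp e1)
  have hne : ∀ q, (k q : ZMod p) ≠ 0 := by
    intro q h
    have h1 : k q • n = 0 • n := c.nsmul_eq (by rw [h]; simp)
    rw [zero_nsmul, ← hk] at h1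
    exact c.n0 (B.L_inj q (by rw [h1, map_zero]))
  have hcard : Nat.card B.Q ≤ Nat.card {x : ZMod p // x ≠ 0} := by
    apply Nat.card_le_card_of_injective (fun q : B.Q => (⟨(k q.1 : ZMod p), hne _⟩ : {x : ZMod p // x ≠ 0}))
    intro q q' e
    have e : (k q.1 : ZMod p) = k q'.1 := congrArg Subtype.val e
    apply Subtype.ext
    apply hinj _ q.2 _ q'.2
    rw [hk, hk, c.nsmul_eq e]
  have h2 : Nat.card {x : ZMod p // x ≠ 0} < Nat.card (ZMod p) :=
    Finite.card_subtype_lt (x := 0) (by simp)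
  rw [Nat.card_zmod] at h2
  omega

lemma normal_odd (c : B.Coord n E Φ) (hp2 : p ≠ 2) (h : A) (hh : h ∈ B.Bp) (q : A) (hq : q ∈ B.Q) : B.L h q = q := by
  letI := B.actBp B.Q B.QL
  obtain ⟨k, hk⟩ := B.P_pgroup.card_orbit (⟨q, hq⟩ : B.Q)
  have h1 : Nat.card (MulAction.orbit B.P (⟨q, hq⟩ : B.Q)) ≤ Nat.card B.Q :=
    Finite.card_subtype_le _
  have h2 := c.cardQ_lt hp2
  have hk0 : k = 0 := by
    by_contra h0
    have := Nat.le_self_pow h0 p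
    omega
  rw [hk0, pow_zero] at hk
  have hs := (Nat.card_eq_one_iff_unique.mp hk).1
  have := Subsingleton.elim
    (⟨(⟨B.S h, B.S_mem_P hh⟩ : B.P) • (⟨q, hq⟩ : B.Q), MulAction.mem_orbit _ _⟩ :
      MulAction.orbit B.P (⟨q, hq⟩ : B.Q)) ⟨⟨q, hq⟩, MulAction.mem_orbit_self _⟩
  have := congrArg Subtype.val (congrArg Subtype.val this)
  exact (B.actBp_smul B.Q B.QL h hh ⟨q, hq⟩).symm.trans this

end Coord

lemma Bp_Q (q : A) (h1 : q ∈ B.Bp) (h2 : q ∈ B.Q) : q = 0 := by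
  obtain ⟨m, hm⟩ := B.cardBp
  have e1 : Nat.card B.Bp • q = 0 := by
    have := card_nsmul_eq_zero' (G := B.Bp) (x := ⟨q, h1⟩)
    exact congrArg Subtype.val this
  have e2 : Nat.card B.Q • q = 0 := by
    have := card_nsmul_eq_zero' (G := B.Q) (x := ⟨q, h2⟩)
    exact congrArg Subtype.val this
  have h5 := Nat.eq_one_of_dvd_coprimes (B.cardQ.pow_right m) (addOrderOf_dvd_of_nsmul_eq_zero e2)
    (hm ▸ addOrderOf_dvd_of_nsmul_eq_zero e1)
  exact AddMonoid.addOrderOf_eq_one_iff.mp h5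

lemma normal_two (hp2 : p = 2) (h : A) (hh : h ∈ B.Bp) (q : A) (hq : q ∈ B.Q) : B.L h q = q := by
  by_contra hne
  have hq0 : q ≠ 0 := by rintro rfl; exact hne (map_zero _)
  have hX4 : Nat.card X = 4 := by rw [B.cardX, hp2]; rfl
  have hc : Nat.card B.Q = 3 := by
    have h1 : Nat.card B.Q ∣ 24 := by
      have := Subgroup.card_subgroup_dvd_card (B.img B.Q B.QL)
      rw [B.card_img, Nat.card_perm, hX4] at this
      exact this
    have h2 : (Nat.card B.Q).Coprime 2 := by
      have := B.cardQ
      generalize Nat.card B.Q = m at this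
      rwa [hp2] at this
    have h3 : Nat.card B.Q ∣ 3 := by
      have : Nat.Coprime (Nat.card B.Q) (2 ^ 3) := h2.pow_right 3
      exact this.dvd_of_dvd_mul_left (m := 2 ^ 3) h1
    rcases (Nat.dvd_prime Nat.prime_three).mp h3 with h4 | h4
    · have hs := (Nat.card_eq_one_iff_unique.mp h4).1
      exact absurd (congrArg Subtype.val (Subsingleton.elim (⟨q, hq⟩ : B.Q) 0)) hq0
    · exact h4
  have h3q : ∀ r ∈ B.Q, 3 • r = 0 := by
    intro r hr
    have := card_nsmul_eq_zero' (G := B.Q) (x := ⟨r, hr⟩)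
    rw [hc] at this
    exact congrArg Subtype.val this
  have hneg : ∀ r ∈ B.Q, r ≠ 0 → r ≠ -r := by
    intro r hr h0 e
    apply h0
    have h1 : r + r = 0 := by nth_rw 2 [e]; simp
    have h2 := h3q r hr
    rw [show (3 : ℕ) = 2 + 1 from rfl, add_nsmul, two_nsmul, h1, one_nsmul, zero_add] at h2
    exact h2
  have hS3 : ∀ r ∈ B.Q, B.S r ^ 3 = 1 := by
    intro r hr
    have := pow_card_eq_one' (G := B.img B.Q B.QL) (x := ⟨B.S r, ⟨r, hr, rfl⟩⟩)
    rw [B.card_img, hc] at this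
    exact congrArg Subtype.val this
  have hall : ∀ r ∈ B.Q, r = 0 ∨ r = q ∨ r = -q := by
    have : ({0, q, -q} : Set A) = B.Q := by
      apply Set.eq_of_subset_of_ncard_le
      · intro r hr
        rcases hr with rfl | rfl | rfl
        · exact B.Q.zero_mem
        · exact hq
        · exact B.Q.neg_mem hq
      · have e : (B.Q : Set A).ncard = 3 := hc
        rw [e, Set.ncard_eq_three.mpr ⟨0, q, -q, hq0.symm, (neg_ne_zero.mpr hq0).symm, hneg q hq hq0, rfl⟩]
      · exact Set.toFinite _
    intro r hr
    have : r ∈ ({0, q, -q} : Set A) := this ▸ hr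
    simpa using this
  have Lne : ∀ a r, r ≠ 0 → B.L a r ≠ 0 := fun a r hr e => hr (B.L_inj a (by rw [e, map_zero]))
  have hLq : B.L q q = q := by
    rcases hall _ (B.QL q q hq) with e | e | e
    · exact absurd e (Lne _ _ hq0)
    · exact e
    · exfalso
      have h1 := B.S_add q (-q)
      rw [map_neg, e, neg_neg, add_neg_cancel, B.S_zero, ← pow_two] at h1
      have h2 := hS3 q hq
      rw [pow_succ, ← h1, one_mul] at h2
      exact hq0 (B.S_inj (by rw [h2, B.S_zero]))
  have hLh : B.L h q = -q := by
    rcases hall _ (B.QL h q hq) with e | e | e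
    · exact absurd e (Lne _ _ hq0)
    · exact absurd e hne
    · exact e
  have hpres : ∀ x, B.ιq (B.S q x) = B.ιq x := by
    intro x
    rw [← B.L_ιq]
    rcases hall _ (B.ιq_mem x) with e | e | e <;> rw [e]
    · exact map_zero _
    · exact hLq
    · rw [map_neg, hLq]
  have hflip : ∀ x, B.ιq (B.S h x) = - B.ιq x := by
    intro x
    rw [← B.L_ιq]
    rcases hall _ (B.ιq_mem x) with e | e | e <;> rw [e]
    · rw [map_zero, neg_zero]
    · exact hLh
    · rw [map_neg, hLh]
  have hι0 : ∀ x, B.ιq x ≠ 0 := by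
    intro x e
    have e2 : ∀ y, B.ιq y = 0 := by
      intro y
      obtain ⟨g, _, rfl⟩ := B.trP x y
      rw [← B.L_ιq, e, map_zero]
    have e3 : ∀ a, B.πq a = 0 := by
      intro a
      have : a ∈ AddSubmonoid.closure (Set.range B.ι) := by rw [B.gen]; trivial
      induction this using AddSubmonoid.closure_induction with
      | mem x hx => obtain ⟨x, rfl⟩ := hx; exact e2 x
      | zero => rw [map_zero]
      | add a b _ _ h1 h2 => rw [map_add, h1, h2, add_zero]
    apply hq0
    apply B.Bp_Q q _ hq
    have := B.π_add q
    rw [e3, add_zero] at this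
    rw [← this]
    exact B.πp_mem _
  obtain ⟨x, hx⟩ : ∃ x, B.S q x ≠ x := by
    by_contra hcon
    push Not at hcon
    apply hq0
    apply B.S_inj
    rw [B.S_zero]
    exact Equiv.ext hcon
  have hx3 : B.S q (B.S q (B.S q x)) = x :=
    congrArg (fun g : Perm X => g x) (hS3 q hq)
  let T : Set X := {u | B.ιq u = B.ιq x}
  let T' : Set X := {u | B.ιq u = - B.ιq x}
  have c1 : 3 ≤ T.ncard := by
    have e : ({x, B.S q x, B.S q (B.S q x)} : Set X).ncard = 3 :=
      Set.ncard_eq_three.mpr ⟨_, _, _, hx.symm, fun e => hx ((congrArg (B.S q) e).trans hx3),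
        fun e => hx ((B.S q).injective e.symm), rfl⟩
    rw [← e]
    apply Set.ncard_le_ncard _ (Set.toFinite _)
    rintro u (rfl | rfl | rfl)
    · rfl
    · exact hpres _
    · exact (hpres _).trans (hpres _)
  have c2 : T.ncard ≤ T'.ncard := by
    rw [← Set.ncard_image_of_injective T (B.S h).injective]
    apply Set.ncard_le_ncard _ (Set.toFinite _)
    rintro _ ⟨u, hu, rfl⟩
    show B.ιq (B.S h u) = _
    rw [hflip, hu]
  have c3 : Disjoint T T' := by
    rw [Set.disjoint_left]
    intro u h1 h2
    have h1 : B.ιq u = B.ιq x := h1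
    have h2 : B.ιq u = - B.ιq x := h2
    exact hneg _ (B.ιq_mem x) (hι0 x) (h1.symm.trans h2)
  have c4 := Set.ncard_union_eq c3 (Set.toFinite _) (Set.toFinite _)
  have c5 : (T ∪ T').ncard ≤ Nat.card X := Set.ncard_le_card _
  omega

theorem normal (h : A) (hh : h ∈ B.Bp) (q : A) (hq : q ∈ B.Q) : B.L h q = q := by
  by_cases hp2 : p = 2
  · exact B.normal_two hp2 h hh q hq
  · obtain ⟨n, E, Φ, c⟩ := B.exists_coord
    exact c.normal_odd hp2 h hh q hq

end PB
end CS18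


namespace CS18
open Equiv

theorem part3_aux {p : ℕ} [Fact p.Prime] {A X : Type} [AddCommGroup A] [Finite A] [Finite X]
    (B : PB p A X) : ∃ (Φ : ZMod p → ZMod p) (k : ZMod p) (E : ZMod p × ZMod p ≃ X),
      (∃ i j, Φ i ≠ Φ j) ∧ (∀ t, Φ (-t) = Φ t) ∧ k ≠ 0 ∧ (∀ t, Φ (k * t) = k * Φ t) ∧
      ∀ a x b y, B.S (B.ι (E (a, x))) (E (b, y)) = E (k * b + k * x, k * y + k * Φ (b - a)) := by
  obtain ⟨n, E, Φ, c⟩ := B.exists_coord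
  obtain ⟨x0⟩ := B.hneX
  obtain ⟨q, hq⟩ : ∃ q, q = B.ιq x0 := ⟨_, rfl⟩
  have hqQ : q ∈ B.Q := hq ▸ B.ιq_mem x0
  have hqc : ∀ x, B.ιq x = q := by
    intro x
    obtain ⟨h, hh, rfl⟩ := B.trP x0 x
    rw [← B.L_ιq, ← hq, B.normal h hh q hqQ]
  have hSι : ∀ x, B.S (B.ι x) = B.S q * B.S (B.ιp x) := by
    intro x
    rw [B.ι_eq, B.S_add, hqc, B.normal _ (B.ιp_mem x) q hqQ]
  have hcomm : ∀ x, B.S q * B.S (B.ιp x) = B.S (B.ιp (B.S q x)) * B.S q := by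
    intro x
    rw [← B.L_ιp, ← B.S_add, add_comm, B.S_add, B.normal _ (B.ιp_mem x) q hqQ]
  have hLF : B.L q n ∈ B.F := by
    refine ⟨B.BL _ _ c.nF.1, fun h hh => ?_⟩
    have hB : B.L (B.inv q) h ∈ B.Bp := B.BL _ _ hh
    have e1 := B.L_add q (B.L (B.inv q) h) n
    rw [add_comm, B.L_add, B.normal _ hB q hqQ, c.nF.2 _ hB, B.L_L_inv] at e1
    exact e1.symm
  obtain ⟨k, hk⟩ := c.Fn _ hLF
  have hk0 : (k : ZMod p) ≠ 0 := by
    intro h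
    have h1 : k • n = 0 • n := c.nsmul_eq (by rw [h]; simp)
    rw [zero_nsmul, ← hk] at h1
    exact c.n0 (B.L_inj q (by rw [h1, map_zero]))
  obtain ⟨β, m, hβ⟩ := c.Sq_form q k hk
  have key : ∀ a x b, E (β (b + x), k * (0 + Φ (b - a)) + m (b + x)) =
      E (β b + (k * x + m a), k * 0 + m b + Φ (β b - β a)) := by
    intro a x b
    have := congrArg (fun g : Perm X => g (E (b, 0))) (hcomm (E (a, x)))
    simp only [Perm.mul_apply] at this
    rw [c.Sι, hβ, hβ, hβ, c.Sι] at this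
    exact this
  have hm : ∀ a, m a = 0 := by
    intro a
    have := congrArg Prod.fst (E.injective (key a 0 0))
    simp only [add_zero, mul_zero, zero_add] at this
    linear_combination -this
  have hβ2 : ∀ b, β b = β 0 + k * b := by
    intro b
    have := congrArg Prod.fst (E.injective (key 0 b 0))
    simp only [zero_add, hm, add_zero] at this
    exact this
  have hΦ : ∀ t, Φ (k * t) = k * Φ t := by
    intro t
    have := congrArg Prod.snd (E.injective (key 0 0 t))
    simp only [zero_add, hm, add_zero, mul_zero, sub_zero] at this
    rw [this, hβ2 t]; congr 1; ring
  obtain ⟨b1, hb1⟩ : ∃ b1, β 0 + k * b1 = b1 := by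
    by_cases h1 : (k : ZMod p) = 1
    · have h2 : k • n = 1 • n := c.nsmul_eq (by rw [h1]; simp)
      have h3 := c.fix_zero q hqQ (by rw [hk, h2, one_nsmul])
      refine ⟨0, ?_⟩
      have := hβ 0 0
      rw [h3, B.S_zero, Perm.one_apply] at this
      have := congrArg Prod.fst (E.injective this)
      simp only at this
      rw [← this]; ring
    · have : (1 : ZMod p) - k ≠ 0 := sub_ne_zero.mpr (Ne.symm h1)
      refine ⟨β 0 / (1 - k), ?_⟩
      field_simp; ring
  refine ⟨Φ, k, ((Equiv.addRight b1).prodCongr (Equiv.refl _)).trans E, c.nc, c.ev, hk0, hΦ, ?_⟩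
  have hE' : ∀ b y, ((Equiv.addRight b1).prodCongr (Equiv.refl (ZMod p))).trans E (b, y) =
      E (b + b1, y) := fun _ _ => rfl
  intro a x b y
  rw [hSι, Perm.mul_apply, hE', hE', hE', c.Sι, hβ, hm, hβ2]
  congr 2
  · linear_combination hb1
  · rw [show b + b1 - (a + b1) = b - a by ring]; ring

theorem part3 {p : ℕ} [Fact p.Prime] (X : Type) (C : CycleSet X) (hX : Nat.card X = p ^ 2)
    (hC : C.Indecomposable) (hI : C.Irretractable) :
      ∃ (Φ : ZMod p → ZMod p) (α : ZMod p),
        (∃ i j : ZMod p, Φ i ≠ Φ j) ∧ (∀ A : ZMod p, Φ (-A) = Φ A) ∧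
        α ≠ 0 ∧ (∀ A : ZMod p, Φ (α * A) = α * Φ A) ∧
        ∃ D : CycleSet (ZMod p × ZMod p),
          (∀ a b x y : ZMod p,
            D.op (a, x) (b, y) = (α * b + α * x, α * y + α * Φ (b - a))) ∧
          C.Iso D := by
  haveI : Finite X := Nat.finite_of_card_ne_zero
    (by rw [hX]; exact pow_ne_zero 2 (Fact.out : p.Prime).ne_zero)
  obtain ⟨A, _, _, B0, hB0⟩ := exists_br C
  obtain ⟨B, hB⟩ := exists_pb B0 C hB0 hX hC hI
  obtain ⟨Φ, k, E, h1, h2, h3, h4, h5⟩ := part3_aux B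
  obtain ⟨D, hD, _⟩ := part1 Φ k h1 h2 h3 h4
  refine ⟨Φ, k, h1, h2, h3, h4, D, hD, E.symm, E.symm.bijective, ?_⟩
  intro u v
  obtain ⟨⟨a, x⟩, rfl⟩ := E.surjective u
  obtain ⟨⟨b, y⟩, rfl⟩ := E.surjective v
  have e : C.op (E (a, x)) (E (b, y)) = B.S (B.ι (E (a, x))) (E (b, y)) := by
    rw [hB, hB0]; rfl
  rw [e, h5, Equiv.symm_apply_apply, Equiv.symm_apply_apply, Equiv.symm_apply_apply, hD]

end CS18

theorem stmt18 {p : ℕ} (hp : p.Prime) :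
    (∀ (Φ : ZMod p → ZMod p) (α : ZMod p),
      (∃ i j : ZMod p, Φ i ≠ Φ j) → (∀ A : ZMod p, Φ (-A) = Φ A) →
      α ≠ 0 → (∀ A : ZMod p, Φ (α * A) = α * Φ A) →
      ∃ C : CycleSet (ZMod p × ZMod p),
        (∀ a b x y : ZMod p,
          C.op (a, x) (b, y) = (α * b + α * x, α * y + α * Φ (b - a))) ∧
        C.Indecomposable ∧ C.Irretractable) ∧
    (∀ (Φ Φ' : ZMod p → ZMod p) (α α' : ZMod p),
      (∃ i j : ZMod p, Φ i ≠ Φ j) → (∀ A : ZMod p, Φ (-A) = Φ A) →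
      α ≠ 0 → (∀ A : ZMod p, Φ (α * A) = α * Φ A) →
      (∃ i j : ZMod p, Φ' i ≠ Φ' j) → (∀ A : ZMod p, Φ' (-A) = Φ' A) →
      α' ≠ 0 → (∀ A : ZMod p, Φ' (α' * A) = α' * Φ' A) →
      ∀ (C D : CycleSet (ZMod p × ZMod p)),
        (∀ a b x y : ZMod p,
          C.op (a, x) (b, y) = (α * b + α * x, α * y + α * Φ (b - a))) →
        (∀ a b x y : ZMod p,
          D.op (a, x) (b, y) = (α' * b + α' * x, α' * y + α' * Φ' (b - a))) →
        (C.Iso D ↔ α = α' ∧ ∃ β : ZMod p, β ≠ 0 ∧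
          ∀ A : ZMod p, β⁻¹ * Φ (β * A) = Φ' A)) ∧
    (∀ (X : Type) (C : CycleSet X), Nat.card X = p ^ 2 →
      C.Indecomposable → C.Irretractable →
      ∃ (Φ : ZMod p → ZMod p) (α : ZMod p),
        (∃ i j : ZMod p, Φ i ≠ Φ j) ∧ (∀ A : ZMod p, Φ (-A) = Φ A) ∧
        α ≠ 0 ∧ (∀ A : ZMod p, Φ (α * A) = α * Φ A) ∧
        ∃ D : CycleSet (ZMod p × ZMod p),
          (∀ a b x y : ZMod p,
            D.op (a, x) (b, y) = (α * b + α * x, α * y + α * Φ (b - a))) ∧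
          C.Iso D) := by
  haveI : Fact p.Prime := ⟨hp⟩
  refine ⟨fun Φ α hnc ev hα hΦ => CS18.part1 Φ α hnc ev hα hΦ, ?_,
    fun X C hX hC hI => CS18.part3 X C hX hC hI⟩
  intro Φ Φ' α α' hnc ev hα hΦ hnc' ev' hα' hΦ' C D hC hD
  constructor
  · intro h
    by_cases hp2 : p = 2
    · subst hp2
      exact CS18.part2_two Φ Φ' α α' hnc hα hnc' hα' C D hC hD h
    · exact CS18.part2_mp Φ Φ' α α' hp2 hnc hα hΦ ev' hα' hΦ' C D hC hD h
  · rintro ⟨rfl, β, hβ, h⟩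
    exact CS18.part2_mpr Φ Φ' α C D hC hD β hβ h
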